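/- arXiv:1202.0874 — 2 statements merged into one kernel-verified Lean document; each statement's English description precedes it below -/
import Mathlib

section
/- For every positive integer k, both Z_{λ₂}(2k, 2k+1, 2k+1, 2k+1, 2k+1, 2k+1) and Z_{A₃}(2k, 2k+1, 2k+1, 2k+1, 2k+1, 2k+1) belong to the ℚ-subalgebra of ℝ generated by the set of Riemann zeta values {ζ(j) : j an integer, j ≥ 2}. -/
open Complex

/-- Generic real triple zeta-sum of type `A₃` with a weight `w` on `(l,m,n)`,
at positive integer arguments. -/
noncomputable def Z3r (w : ℕ → ℕ → ℕ → ℝ) (s₁ s₂ s₃ s₄ s₅ s₆ : ℕ) : ℝ :=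
  ∑' t : ℕ × ℕ × ℕ,
    w (t.1 + 1) (t.2.1 + 1) (t.2.2 + 1) /
      (((t.1 + 1 : ℕ) : ℝ) ^ s₁ * ((t.2.1 + 1 : ℕ) : ℝ) ^ s₂ *
        ((t.2.2 + 1 : ℕ) : ℝ) ^ s₃ * ((t.1 + 1 + (t.2.1 + 1) : ℕ) : ℝ) ^ s₄ *
        ((t.2.1 + 1 + (t.2.2 + 1) : ℕ) : ℝ) ^ s₅ *
        ((t.1 + 1 + (t.2.1 + 1) + (t.2.2 + 1) : ℕ) : ℝ) ^ s₆)

/-- `ζ₃(s₁,…,s₆;A₃)` at positive integer arguments. -/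
noncomputable def ZA3r : ℕ → ℕ → ℕ → ℕ → ℕ → ℕ → ℝ := Z3r (fun _ _ _ => 1)

/-- `ζ₃(s₁,…,s₆,λ₂∨;SU(4))` at positive integer arguments, with numerator `(-1)^{l+n}`. -/
noncomputable def Zlam2r : ℕ → ℕ → ℕ → ℕ → ℕ → ℕ → ℝ :=
  Z3r (fun l _ n => (-1 : ℝ) ^ (l + n))

/-- The set of values `ζ(j)` of the Riemann zeta function at integers `j ≥ 2`,
viewed inside `ℝ`. -/
def zetaValues : Set ℝ := {x : ℝ | ∃ j : ℕ, 2 ≤ j ∧ (x : ℂ) = riemannZeta j}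

namespace KMT
open Filter Topology

noncomputable abbrev A : Subalgebra ℚ ℝ := Algebra.adjoin ℚ zetaValues

lemma sum_inv (r : ℕ) (hr : 2 ≤ r) : Summable (fun n : ℕ => (((n + 1 : ℕ) : ℝ)⁻¹) ^ r) := by
  have := (summable_nat_add_iff 1).2 (Real.summable_nat_pow_inv.2 (show 1 < r by omega))
  simpa [inv_pow] using this

lemma zeta_mem (r : ℕ) (hr : 2 ≤ r) : ∑' n : ℕ, (((n + 1 : ℕ) : ℝ)⁻¹) ^ r ∈ A := by
  apply Algebra.subset_adjoin
  refine ⟨r, hr, ?_⟩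
  rw [zeta_nat_eq_tsum_of_gt_one (by omega)]
  have h2 : Summable (fun n : ℕ => ((n : ℝ)⁻¹) ^ r) := by
    simpa [inv_pow] using Real.summable_nat_pow_inv.2 (show 1 < r by omega)
  have h : ∑' n : ℕ, (((n + 1 : ℕ) : ℝ)⁻¹) ^ r = ∑' n : ℕ, ((n : ℝ)⁻¹) ^ r := by
    rw [h2.tsum_eq_zero_add]
    simp [show r ≠ 0 by omega]
  rw [h, Complex.ofReal_tsum]
  simp

lemma eta_mem (s : ℝ) (hs : s = 1 ∨ s = -1) (r : ℕ) (hr : 2 ≤ r) :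
    ∑' n : ℕ, s ^ (n + 1) * (((n + 1 : ℕ) : ℝ)⁻¹) ^ r ∈ A := by
  have hz := zeta_mem r hr
  have hS := sum_inv r hr
  rcases hs with rfl | rfl
  · simpa using hz
  · set z := ∑' n : ℕ, (((n + 1 : ℕ) : ℝ)⁻¹) ^ r with hzd
    have he : Summable (fun n : ℕ => (((2 * n + 1 : ℕ) : ℝ)⁻¹) ^ r) := by
      have := hS.comp_injective (i := fun n : ℕ => 2 * n) (fun a b h => by simpa using h)
      exact this
    have ho : Summable (fun n : ℕ => (((2 * n + 1 + 1 : ℕ) : ℝ)⁻¹) ^ r) := by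
      have := hS.comp_injective (i := fun n : ℕ => 2 * n + 1) (fun a b h => by simpa using h)
      exact this
    have h1 : ∑' n : ℕ, (((2 * n + 1 : ℕ) : ℝ)⁻¹) ^ r
        + ∑' n : ℕ, (((2 * n + 1 + 1 : ℕ) : ℝ)⁻¹) ^ r = z :=
      tsum_even_add_odd (f := fun n : ℕ => (((n + 1 : ℕ) : ℝ)⁻¹) ^ r) he ho
    have h2 : ∑' n : ℕ, (((2 * n + 1 + 1 : ℕ) : ℝ)⁻¹) ^ r = ((2:ℝ)⁻¹) ^ r * z := by
      rw [hzd, ← tsum_mul_left]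
      refine tsum_congr fun n => ?_
      rw [← mul_pow, ← mul_inv]
      push_cast
      ring
    have h3 := tsum_even_add_odd
      (f := fun n : ℕ => (-1 : ℝ) ^ (n + 1) * (((n + 1 : ℕ) : ℝ)⁻¹) ^ r)
      (by simpa [pow_succ, pow_mul] using he.neg) (by simpa [pow_succ, pow_mul] using ho)
    have h4 : ∑' n : ℕ, (-1 : ℝ) ^ (2 * n + 1) * (((2 * n + 1 : ℕ) : ℝ)⁻¹) ^ r
        = - ∑' n : ℕ, (((2 * n + 1 : ℕ) : ℝ)⁻¹) ^ r := by
      rw [← tsum_neg]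
      refine tsum_congr fun n => ?_
      simp [pow_succ, pow_mul]
    have h5 : ∑' n : ℕ, (-1 : ℝ) ^ (2 * n + 1 + 1) * (((2 * n + 1 + 1 : ℕ) : ℝ)⁻¹) ^ r
        = ∑' n : ℕ, (((2 * n + 1 + 1 : ℕ) : ℝ)⁻¹) ^ r := by
      refine tsum_congr fun n => ?_
      simp [pow_succ, pow_mul]
    rw [← h3, h4, h5]
    have : -∑' n : ℕ, (((2 * n + 1 : ℕ) : ℝ)⁻¹) ^ r + ∑' n : ℕ, (((2 * n + 1 + 1 : ℕ) : ℝ)⁻¹) ^ r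
        = (2 * (2⁻¹) ^ r - 1 : ℚ) • z := by
      rw [Algebra.smul_def, eq_ratCast, show ((2 * (2⁻¹) ^ r - 1 : ℚ) : ℝ) = 2 * (2⁻¹) ^ r - 1 by push_cast; ring]
      linarith
    rw [this]
    exact A.smul_mem hz _

lemma symS_succ (f : ℤ → ℝ) (N : ℕ) :
    ∑ c ∈ Finset.Icc (-((N + 1 : ℕ) : ℤ)) ((N + 1 : ℕ) : ℤ), f c
      = ∑ c ∈ Finset.Icc (-(N : ℤ)) N, f c + (f (N + 1 : ℕ) + f (-(N + 1 : ℕ))) := by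
  have : Finset.Icc (-((N + 1 : ℕ) : ℤ)) ((N + 1 : ℕ) : ℤ)
      = insert ((N + 1 : ℕ) : ℤ) (insert (-((N + 1 : ℕ) : ℤ)) (Finset.Icc (-(N : ℤ)) N)) := by
    ext x; simp only [Finset.mem_Icc, Finset.mem_insert]; omega
  rw [this, Finset.sum_insert, Finset.sum_insert]
  · ring
  · simp only [Finset.mem_Icc]; omega
  · simp only [Finset.mem_Icc, Finset.mem_insert]; omega

lemma symS_eq (f : ℤ → ℝ) (N : ℕ) :
    ∑ c ∈ Finset.Icc (-(N : ℤ)) N, f c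
      = f 0 + ∑ n ∈ Finset.range N, (f (n + 1 : ℕ) + f (-(n + 1 : ℕ))) := by
  induction N with
  | zero => simp
  | succ N ih => rw [symS_succ, ih, Finset.sum_range_succ]; ring

lemma S_lim (s : ℝ) (hs : s = 1 ∨ s = -1) (r : ℕ) (hr : 1 ≤ r) :
    ∃ a ∈ A, Tendsto (fun N : ℕ => ∑ c ∈ Finset.Icc (-(N : ℤ)) N, s ^ c * ((c : ℝ)⁻¹) ^ r)
      atTop (𝓝 a) := by
  have hneg : ∀ c : ℤ, s ^ (-c) = s ^ c := by
    intro c; rcases hs with rfl | rfl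
    · simp
    · rw [zpow_neg, ← inv_zpow]; norm_num
  rcases Nat.even_or_odd r with he | ho
  · have h2 : 2 ≤ r := by obtain ⟨t, rfl⟩ := he; omega
    have hsum : Summable (fun n : ℕ => s ^ (n + 1) * (((n + 1 : ℕ) : ℝ)⁻¹) ^ r) := by
      refine Summable.of_norm_bounded (sum_inv r h2) fun n => ?_
      rw [norm_mul, norm_pow, norm_pow, show ‖s‖ = 1 by rcases hs with rfl | rfl <;> simp, one_pow,
        one_mul, norm_inv, Real.norm_natCast]
    refine ⟨2 • ∑' n : ℕ, s ^ (n + 1) * (((n + 1 : ℕ) : ℝ)⁻¹) ^ r,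
      A.nsmul_mem (eta_mem s hs r h2) 2, ?_⟩
    have := (hsum.hasSum.tendsto_sum_nat).const_mul 2
    rw [nsmul_eq_mul]
    refine this.congr fun N => ?_
    rw [symS_eq, Finset.mul_sum]
    simp only [Int.cast_zero, inv_zero, zero_pow (show r ≠ 0 by omega), mul_zero, zero_add]
    refine Finset.sum_congr rfl fun n _ => ?_
    rw [hneg]
    push_cast
    rw [inv_neg, he.neg_pow]
    rw [← zpow_natCast s (n + 1)]
    push_cast; ring
  · refine ⟨0, A.zero_mem, ?_⟩
    refine tendsto_const_nhds.congr fun N => ?_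
    rw [symS_eq]
    simp only [Int.cast_zero, inv_zero, zero_pow (show r ≠ 0 by omega), mul_zero, zero_add]
    refine (Finset.sum_eq_zero fun n _ => ?_).symm
    rw [hneg]
    push_cast
    rw [inv_neg, ho.neg_pow]
    ring

/-- shifting does not change symmetric limits -/
lemma shift1 (f : ℤ → ℝ) (N : ℕ) :
    ∑ c ∈ Finset.Icc (-(N : ℤ)) N, f (c + 1)
      = ∑ c ∈ Finset.Icc (-(N : ℤ)) N, f c + f (N + 1) - f (-N) := by
  induction N with
  | zero => simp
  | succ N ih =>
    rw [symS_succ, symS_succ, ih]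
    push_cast
    rw [show (-((N : ℤ) + 1) + 1) = -N by ring]
    ring

lemma shift_lim (f : ℤ → ℝ) (a : ℝ) (h1 : Tendsto f atTop (𝓝 0)) (h2 : Tendsto f atBot (𝓝 0))
    (h : Tendsto (fun N : ℕ => ∑ c ∈ Finset.Icc (-(N : ℤ)) N, f c) atTop (𝓝 a)) (u : ℤ) :
    Tendsto (fun N : ℕ => ∑ c ∈ Finset.Icc (-(N : ℤ)) N, f (c + u)) atTop (𝓝 a) := by
  have hN : Tendsto (fun N : ℕ => (N : ℤ)) atTop atTop := tendsto_natCast_atTop_atTop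
  have hN' : Tendsto (fun N : ℕ => -(N : ℤ)) atTop atBot := tendsto_neg_atTop_atBot.comp hN
  have key : ∀ v : ℤ, Tendsto (fun N : ℕ => ∑ c ∈ Finset.Icc (-(N : ℤ)) N, f (c + (v + 1))
      - ∑ c ∈ Finset.Icc (-(N : ℤ)) N, f (c + v)) atTop (𝓝 0) := by
    intro v
    have e1 : Tendsto (fun N : ℕ => f ((N : ℤ) + 1 + v)) atTop (𝓝 0) :=
      h1.comp (tendsto_atTop_add_const_right _ _ (tendsto_atTop_add_const_right _ _ hN))
    have e2 : Tendsto (fun N : ℕ => f (-(N : ℤ) + v)) atTop (𝓝 0) :=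
      h2.comp (tendsto_atBot_add_const_right _ _ hN')
    have := e1.sub e2
    rw [sub_zero] at this
    refine this.congr fun N => ?_
    have := shift1 (fun c => f (c + v)) N
    simp only [show ∀ c : ℤ, c + (v + 1) = c + 1 + v by intro c; ring]
    rw [this]; ring
  induction u using Int.induction_on with
  | zero => simpa using h
  | succ i ih => simpa using ih.add (key i)
  | pred i ih => 
    have := ih.sub (key (-i - 1))
    simpa using this

lemma inv_lim (s : ℝ) (hs : s = 1 ∨ s = -1) (r : ℕ) (hr : 1 ≤ r) (l : Filter ℤ)
    (hl : Tendsto (fun c : ℤ => ((c : ℝ))⁻¹) l (𝓝 0)) :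
    Tendsto (fun c : ℤ => s ^ c * ((c : ℝ)⁻¹) ^ r) l (𝓝 0) := by
  have h := hl.pow r
  rw [zero_pow (by omega)] at h
  refine squeeze_zero_norm (fun c => ?_) (by simpa using h.norm)
  rcases hs with rfl | rfl <;> simp

lemma base_lim (s : ℝ) (hs : s = 1 ∨ s = -1) (r : ℕ) (hr : 1 ≤ r) :
    ∃ a ∈ A, ∀ u : ℤ, Tendsto (fun N : ℕ => ∑ c ∈ Finset.Icc (-(N : ℤ)) N,
      s ^ c * (((c : ℝ) - u)⁻¹) ^ r) atTop (𝓝 (a * s ^ u)) := by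
  obtain ⟨a, ha, h⟩ := S_lim s hs r hr
  refine ⟨a, ha, fun u => ?_⟩
  have h0 : s ≠ 0 := by rcases hs with rfl | rfl <;> norm_num
  have := shift_lim _ a
    (inv_lim s hs r hr _ (tendsto_inv_atTop_zero.comp tendsto_intCast_atTop_atTop))
    (inv_lim s hs r hr _ (tendsto_inv_atBot_zero.comp (tendsto_intCast_atBot_iff.2 tendsto_id))) h (-u)
  refine (this.mul_const (s ^ u)).congr fun N => ?_
  rw [Finset.sum_mul]
  refine Finset.sum_congr rfl fun c _ => ?_
  rw [mul_right_comm, ← zpow_add₀ h0]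
  simp [sub_eq_add_neg]

end KMT
namespace KMT
open Filter Topology

open Classical in
lemma gen_base {ι Θ : Type} [Fintype ι] (u : ι → Θ → ℤ)
    (hu : ∀ θ, Function.Injective (fun i => u i θ)) (f : ℤ → ℝ) (a : ℝ) (θ : Θ)
    (h : Tendsto (fun N : ℕ => ∑ c ∈ Finset.Icc (-(N : ℤ)) N, f c) atTop (𝓝 a)) :
    Tendsto (fun N : ℕ => ∑ c ∈ Finset.Icc (-(N : ℤ)) N, if (∃ i, c = u i θ) then 0 else f c)
      atTop (𝓝 (a - ∑ i, f (u i θ))) := by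
  refine (h.sub_const _).congr' ?_
  filter_upwards [eventually_ge_atTop (∑ i, (u i θ).natAbs)] with N hN
  have e : ∑ i, f (u i θ)
      = ∑ c ∈ Finset.Icc (-(N : ℤ)) N, if (∃ i, c = u i θ) then f c else 0 := by
    rw [← Finset.sum_filter]
    have : Finset.filter (fun c => ∃ i, c = u i θ) (Finset.Icc (-(N : ℤ)) N)
        = Finset.univ.image (fun i => u i θ) := by
      ext c
      simp only [Finset.mem_filter, Finset.mem_Icc, Finset.mem_image, Finset.mem_univ, true_and]
      constructor
      · rintro ⟨_, i, rfl⟩; exact ⟨i, rfl⟩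
      · rintro ⟨i, rfl⟩
        have := Finset.single_le_sum (f := fun i => (u i θ).natAbs) (fun _ _ => Nat.zero_le _)
          (Finset.mem_univ i)
        refine ⟨by omega, i, rfl⟩
    rw [this, Finset.sum_image (fun i _ j _ hij => hu θ hij)]
  rw [e, ← Finset.sum_sub_distrib]
  refine Finset.sum_congr rfl fun c _ => ?_
  split_ifs <;> simp

open Classical in
lemma gen_rep {ι Θ : Type} [Fintype ι] (u : ι → Θ → ℤ)
    (hu : ∀ θ, Function.Injective (fun i => u i θ)) (s : ℝ) (hs : s = 1 ∨ s = -1)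
    (B : Subalgebra ℚ (Θ → ℝ)) (hA : ∀ a ∈ A, (fun _ => a) ∈ B)
    (hd : ∀ i j, i ≠ j → (fun θ => ((u i θ : ℝ) - u j θ)⁻¹) ∈ B)
    (hsg : ∀ i, (fun θ => s ^ (u i θ)) ∈ B) (r : ℕ) (i : ι) (hr : 1 ≤ r) :
    ∃ g ∈ B, ∀ θ,
      Tendsto (fun N : ℕ => ∑ c ∈ Finset.Icc (-(N : ℤ)) N, if (∃ i, c = u i θ) then 0 else
        s ^ c * ((Multiset.replicate r i).map fun i => ((c : ℝ) - u i θ)⁻¹).prod)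
        atTop (𝓝 (g θ)) := by
  obtain ⟨a, ha, h⟩ := base_lim s hs r hr
  refine ⟨(fun _ => a) * (fun θ => s ^ (u i θ)) - ∑ j, (fun θ => s ^ (u j θ)) *
    (fun θ => ((u j θ : ℝ) - u i θ)⁻¹) ^ r, ?_, fun θ => ?_⟩
  · refine B.sub_mem (B.mul_mem (hA a ha) (hsg i)) (B.sum_mem fun j _ => ?_)
    refine B.mul_mem (hsg j) (B.pow_mem ?_ r)
    by_cases hji : j = i
    · subst hji
      simp only [sub_self, inv_zero]
      exact B.zero_mem
    · exact hd j i hji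
  · have := gen_base u hu _ _ θ (h (u i θ))
    simpa using this

open Classical in
lemma gen {ι Θ : Type} [Fintype ι] (u : ι → Θ → ℤ)
    (hu : ∀ θ, Function.Injective (fun i => u i θ)) (s : ℝ) (hs : s = 1 ∨ s = -1)
    (B : Subalgebra ℚ (Θ → ℝ)) (hA : ∀ a ∈ A, (fun _ => a) ∈ B)
    (hd : ∀ i j, i ≠ j → (fun θ => ((u i θ : ℝ) - u j θ)⁻¹) ∈ B)
    (hsg : ∀ i, (fun θ => s ^ (u i θ)) ∈ B) (n : ℕ) :
    ∀ M : Multiset ι, M.card = n + 1 → ∃ g ∈ B, ∀ θ,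
      Tendsto (fun N : ℕ => ∑ c ∈ Finset.Icc (-(N : ℤ)) N, if (∃ i, c = u i θ) then 0 else
        s ^ c * (M.map fun i => ((c : ℝ) - u i θ)⁻¹).prod) atTop (𝓝 (g θ)) := by
  induction n with
  | zero => ?_
  | succ n ih => ?_
  all_goals
    intro M hM
    obtain ⟨i, hi⟩ : ∃ i, i ∈ M := Multiset.card_pos_iff_exists_mem.1 (by omega)
    obtain ⟨M', rfl⟩ := Multiset.exists_cons_of_mem hi
    by_cases hj : ∃ j ∈ M', j ≠ i
  · obtain ⟨j, hj, -⟩ := hj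
    have := Multiset.card_pos_iff_exists_mem.2 ⟨j, hj⟩
    simp only [Multiset.card_cons] at hM
    omega
  rotate_left
  · obtain ⟨j, hj, hji⟩ := hj
    obtain ⟨M'', rfl⟩ := Multiset.exists_cons_of_mem hj
    obtain ⟨g1, hg1, h1⟩ := ih (i ::ₘ M'') (by simpa using hM)
    obtain ⟨g2, hg2, h2⟩ := ih (j ::ₘ M'') (by simpa using hM)
    refine ⟨_, B.mul_mem (hd i j hji.symm) (B.sub_mem hg1 hg2), fun θ => ?_⟩
    refine (((h1 θ).sub (h2 θ)).const_mul _).congr fun N => ?_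
    rw [← Finset.sum_sub_distrib, Finset.mul_sum]
    refine Finset.sum_congr rfl fun c _ => ?_
    split_ifs with hc
    · simp
    · push Not at hc
      have a1 : (c : ℝ) - u i θ ≠ 0 := sub_ne_zero.2 (by exact_mod_cast hc i)
      have a2 : (c : ℝ) - u j θ ≠ 0 := sub_ne_zero.2 (by exact_mod_cast hc j)
      have a3 : (u i θ : ℝ) - u j θ ≠ 0 :=
        sub_ne_zero.2 (by exact_mod_cast fun h => hji.symm (hu θ h))
      simp only [Multiset.map_cons, Multiset.prod_cons]
      field_simp
      ring
  all_goals
    push Not at hj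
    rw [Multiset.eq_replicate_card.2 hj, ← Multiset.replicate_succ]
    exact gen_rep u hu s hs B hA hd hsg _ i (by omega)

end KMT
namespace KMT
open Filter Topology

lemma sgn_mul {s t : ℝ} (hs : s = 1 ∨ s = -1) (ht : t = 1 ∨ t = -1) : s * t = 1 ∨ s * t = -1 := by
  rcases hs with rfl | rfl <;> rcases ht with rfl | rfl <;> simp

noncomputable def M1 : Submonoid (ℕ → ℝ) where
  carrier := {h | ∃ a ∈ A, ∃ t : ℝ, (t = 1 ∨ t = -1) ∧ ∃ q : ℕ,
    h = fun n : ℕ => a * t ^ ((n : ℤ) + 1) * (((n : ℝ) + 1)⁻¹) ^ q}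
  one_mem' := ⟨1, A.one_mem, 1, Or.inl rfl, 0, by ext; simp⟩
  mul_mem' := by
    rintro _ _ ⟨a, ha, t, ht, q, rfl⟩ ⟨a', ha', t', ht', q', rfl⟩
    refine ⟨a * a', A.mul_mem ha ha', t * t', sgn_mul ht ht', q + q', ?_⟩
    ext n
    simp only [Pi.mul_apply, mul_zpow, pow_add]
    ring

noncomputable def B1 : Subalgebra ℚ (ℕ → ℝ) := Algebra.adjoin ℚ (M1 : Set (ℕ → ℝ))

lemma B1_span : Subalgebra.toSubmodule B1 = Submodule.span ℚ (M1 : Set (ℕ → ℝ)) := by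
  rw [B1, Algebra.adjoin_eq_span, Submonoid.closure_eq]

lemma B1_const {a : ℝ} (ha : a ∈ A) : (fun _ => a) ∈ B1 :=
  Algebra.subset_adjoin ⟨a, ha, 1, Or.inl rfl, 0, by ext; simp⟩

lemma B1_sgn {t : ℝ} (ht : t = 1 ∨ t = -1) : (fun n : ℕ => t ^ ((n : ℤ) + 1)) ∈ B1 :=
  Algebra.subset_adjoin ⟨1, A.one_mem, t, ht, 0, by ext; simp⟩

lemma B1_inv : (fun n : ℕ => (((n : ℝ) + 1)⁻¹)) ∈ B1 :=
  Algebra.subset_adjoin ⟨1, A.one_mem, 1, Or.inl rfl, 1, by ext; simp⟩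

lemma stage3 (s : ℝ) (hs : s = 1 ∨ s = -1) (p : ℕ) (hp : 2 ≤ p) (h : ℕ → ℝ) (hh : h ∈ B1) :
    Summable (fun n : ℕ => s ^ ((n : ℤ) + 1) * (((n : ℝ) + 1)⁻¹) ^ p * h n) ∧
    ∑' n : ℕ, s ^ ((n : ℤ) + 1) * (((n : ℝ) + 1)⁻¹) ^ p * h n ∈ A := by
  rw [← Subalgebra.mem_toSubmodule, B1_span] at hh
  induction hh using Submodule.span_induction with
  | mem x hx =>
    obtain ⟨a, ha, t, ht, q, rfl⟩ := hx
    have hst := sgn_mul hs ht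
    have e : (fun n : ℕ => s ^ ((n : ℤ) + 1) * (((n : ℝ) + 1)⁻¹) ^ p *
        (a * t ^ ((n : ℤ) + 1) * (((n : ℝ) + 1)⁻¹) ^ q)) =
        fun n : ℕ => a * ((s * t) ^ (n + 1) * (((n + 1 : ℕ) : ℝ)⁻¹) ^ (p + q)) := by
      ext n
      rw [← zpow_natCast (s * t)]
      push_cast
      rw [mul_zpow, pow_add]
      ring
    rw [e, tsum_mul_left]
    refine ⟨Summable.mul_left _ ?_, A.mul_mem ha (eta_mem _ hst _ (by omega))⟩
    refine Summable.of_norm_bounded (sum_inv (p + q) (by omega)) fun n => ?_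
    rw [norm_mul, norm_pow, norm_pow, show ‖s * t‖ = 1 by rcases hst with h | h <;> rw [h] <;> simp,
      one_pow, one_mul, norm_inv, Real.norm_natCast]
  | zero => simp [A.zero_mem]
  | add x y _ _ hx hy =>
    simp only [Pi.add_apply, mul_add]
    refine ⟨hx.1.add hy.1, ?_⟩
    rw [hx.1.tsum_add hy.1]
    exact A.add_mem hx.2 hy.2
  | smul r x _ hx =>
    have e : (fun n : ℕ => s ^ ((n : ℤ) + 1) * (((n : ℝ) + 1)⁻¹) ^ p * (r • x) n) =
        fun n : ℕ => (r : ℝ) * (s ^ ((n : ℤ) + 1) * (((n : ℝ) + 1)⁻¹) ^ p * x n) := by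
      ext n
      rw [Pi.smul_apply, Rat.smul_def]; ring
    rw [e, tsum_mul_left, ← Rat.smul_def]
    exact ⟨hx.1.mul_left _, A.smul_mem hx.2 r⟩

abbrev Th2 : Type := {x : ℕ × ℤ // x.2 ≠ 0 ∧ x.2 ≠ (x.1 : ℤ) + 1}

noncomputable def M2 : Submonoid (Th2 → ℝ) where
  carrier := {f | ∃ h ∈ B1, ∃ t : ℝ, (t = 1 ∨ t = -1) ∧ ∃ i j : ℕ,
    f = fun θ => h θ.1.1 * t ^ (θ.1.2) * ((θ.1.2 : ℝ)⁻¹) ^ i *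
      (((θ.1.2 : ℝ) - ((θ.1.1 : ℝ) + 1))⁻¹) ^ j}
  one_mem' := ⟨1, B1.one_mem, 1, Or.inl rfl, 0, 0, by ext; simp⟩
  mul_mem' := by
    rintro _ _ ⟨a, ha, t, ht, i, j, rfl⟩ ⟨a', ha', t', ht', i', j', rfl⟩
    refine ⟨a * a', B1.mul_mem ha ha', t * t', sgn_mul ht ht', i + i', j + j', ?_⟩
    ext n
    simp only [Pi.mul_apply, mul_zpow, pow_add]
    ring

noncomputable def B2 : Subalgebra ℚ (Th2 → ℝ) := Algebra.adjoin ℚ (M2 : Set (Th2 → ℝ))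

lemma B2_span : Subalgebra.toSubmodule B2 = Submodule.span ℚ (M2 : Set (Th2 → ℝ)) := by
  rw [B2, Algebra.adjoin_eq_span, Submonoid.closure_eq]

lemma B2_of {h : ℕ → ℝ} (hh : h ∈ B1) : (fun θ : Th2 => h θ.1.1) ∈ B2 :=
  Algebra.subset_adjoin ⟨h, hh, 1, Or.inl rfl, 0, 0, by ext; simp⟩

lemma B2_sgn {t : ℝ} (ht : t = 1 ∨ t = -1) : (fun θ : Th2 => t ^ (θ.1.2)) ∈ B2 :=
  Algebra.subset_adjoin ⟨1, B1.one_mem, t, ht, 0, 0, by ext; simp⟩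

lemma B2_inv : (fun θ : Th2 => ((θ.1.2 : ℝ)⁻¹)) ∈ B2 :=
  Algebra.subset_adjoin ⟨1, B1.one_mem, 1, Or.inl rfl, 1, 0, by ext; simp⟩

lemma B2_inv' : (fun θ : Th2 => (((θ.1.2 : ℝ) - ((θ.1.1 : ℝ) + 1))⁻¹)) ∈ B2 :=
  Algebra.subset_adjoin ⟨1, B1.one_mem, 1, Or.inl rfl, 0, 1, by ext; simp⟩

lemma stage2 (s : ℝ) (hs : s = 1 ∨ s = -1) (p : ℕ) (hp : 1 ≤ p) (g : Th2 → ℝ) (hg : g ∈ B2) :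
    ∃ h ∈ B1, ∀ n : ℕ, Tendsto (fun N : ℕ => ∑ d ∈ Finset.Icc (-(N : ℤ)) N,
      if hd : d ≠ 0 ∧ d ≠ (n : ℤ) + 1 then
        s ^ d * ((d : ℝ)⁻¹) ^ p * (((d : ℝ) - ((n : ℝ) + 1))⁻¹) ^ p * g ⟨(n, d), hd⟩ else 0)
      atTop (𝓝 (h n)) := by
  rw [← Subalgebra.mem_toSubmodule, B2_span] at hg
  induction hg using Submodule.span_induction with
  | mem x hx =>
    obtain ⟨h, hh, t, ht, i, j, rfl⟩ := hx
    have hst := sgn_mul hs ht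
    obtain ⟨g, hg, H⟩ := gen (ι := Fin 2) (Θ := ℕ) ![fun _ => 0, fun n => (n : ℤ) + 1]
      (by
        intro n a b hab
        fin_cases a <;> fin_cases b <;> simp at hab ⊢ <;> omega)
      (s * t) hst B1 (fun a ha => B1_const ha)
      (by
        intro a b hab
        fin_cases a <;> fin_cases b <;> simp at hab ⊢
        · have := B1.neg_mem B1_inv
          convert this using 2 with n
          simp only [Pi.neg_apply, ← inv_neg]
          congr 1; ring
        · exact B1_inv)
      (by
        intro a
        fin_cases a <;> simp
        · exact B1.one_mem
        · exact B1_sgn hst)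
      (p + i + (p + j) - 1) (Multiset.replicate (p + i) 0 + Multiset.replicate (p + j) 1)
      (by simp; omega)
    refine ⟨h * g, B1.mul_mem hh hg, fun n => ?_⟩
    refine ((H n).const_mul (h n)).congr fun N => ?_
    rw [Finset.mul_sum]
    refine Finset.sum_congr rfl fun d _ => ?_
    by_cases hd : d ≠ 0 ∧ d ≠ (n : ℤ) + 1
    · rw [dif_pos hd, if_neg]
      · simp [mul_zpow, pow_add]
        ring
      · rintro ⟨a, ha⟩
        fin_cases a
        · exact hd.1 (by simpa using ha)
        · exact hd.2 (by simpa using ha)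
    · rw [dif_neg hd, if_pos, mul_zero]
      by_cases h0 : d = 0
      · exact ⟨0, by simpa using h0⟩
      · exact ⟨1, by simp; by_contra h1; exact hd ⟨h0, h1⟩⟩
  | zero => exact ⟨0, B1.zero_mem, fun n => by simp⟩
  | add x y _ _ hx hy =>
    obtain ⟨a, ha, h1⟩ := hx
    obtain ⟨b, hb, h2⟩ := hy
    refine ⟨a + b, B1.add_mem ha hb, fun n => ((h1 n).add (h2 n)).congr fun N => ?_⟩
    rw [← Finset.sum_add_distrib]
    refine Finset.sum_congr rfl fun d _ => ?_
    split_ifs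
    · simp only [Pi.add_apply]; ring
    · simp
  | smul r x _ hx =>
    obtain ⟨a, ha, h1⟩ := hx
    refine ⟨r • a, B1.smul_mem ha r, fun n => ?_⟩
    rw [Pi.smul_apply, Rat.smul_def]
    refine ((h1 n).const_mul (r : ℝ)).congr fun N => ?_
    rw [Finset.mul_sum]
    refine Finset.sum_congr rfl fun d _ => ?_
    split_ifs
    · rw [Pi.smul_apply, Rat.smul_def]; ring
    · simp

lemma stage1 (s : ℝ) (hs : s = 1 ∨ s = -1) (p q : ℕ) (hp : 1 ≤ p) (hq : 1 ≤ q) :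
    ∃ g ∈ B2, ∀ θ : Th2, Tendsto (fun N : ℕ => ∑ c ∈ Finset.Icc (-(N : ℤ)) N,
        s ^ c * ((c : ℝ)⁻¹) ^ p * (((c : ℝ) - ((θ.1.1 : ℝ) + 1))⁻¹) ^ p *
          (((c : ℝ) - θ.1.2)⁻¹) ^ q) atTop (𝓝 (g θ)) := by
  have i1 := B2_of B1_inv
  have i2 := B2_inv
  have i3 := B2_inv'
  have neg : ∀ f : Th2 → ℝ, (fun θ => (f θ)⁻¹) ∈ B2 → (fun θ => (- f θ)⁻¹) ∈ B2 := by
    intro f hf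
    have := B2.neg_mem hf
    convert this using 2 with n
    simp only [Pi.neg_apply, ← inv_neg]
  obtain ⟨g, hg, H⟩ := gen (ι := Fin 3) (Θ := Th2)
      ![fun _ => 0, fun θ => (θ.1.1 : ℤ) + 1, fun θ => θ.1.2]
      (by
        rintro ⟨⟨n, d⟩, h1, h2⟩ a b hab
        simp only at h1 h2
        fin_cases a <;> fin_cases b <;> simp at hab ⊢ <;> omega)
      s hs B2 (fun a ha => B2_of (B1_const ha))
      (by
        intro a b hab
        fin_cases a <;> fin_cases b <;> simp at hab ⊢
        · simpa using neg _ i1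
        · simpa [inv_neg] using neg _ i2
        · exact i1
        · simpa using neg _ i3
        · exact i2
        · exact i3)
      (by
        intro a
        fin_cases a <;> simp
        · exact B2.one_mem
        · exact B2_of (B1_sgn hs)
        · exact B2_sgn hs)
      (p + p + q - 1)
      (Multiset.replicate p 0 + Multiset.replicate p 1 + Multiset.replicate q 2)
      (by simp; omega)
  refine ⟨g, hg, fun θ => (H θ).congr fun N => ?_⟩
  refine Finset.sum_congr rfl fun c _ => ?_
  split_ifs with hc
  · obtain ⟨a, rfl⟩ := hc
    fin_cases a <;> simp [show p ≠ 0 by omega, show q ≠ 0 by omega]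
  · simp
    ring

noncomputable def T (s : ℝ) (p q : ℕ) (x : ℕ × ℤ × ℤ) : ℝ :=
  s ^ ((x.1 : ℤ) + 1) * s ^ x.2.1 * s ^ x.2.2 * (((x.1 : ℝ) + 1)⁻¹) ^ p *
    ((x.2.1 : ℝ)⁻¹) ^ p * (((x.2.1 : ℝ) - ((x.1 : ℝ) + 1))⁻¹) ^ p *
    ((x.2.2 : ℝ)⁻¹) ^ p * (((x.2.2 : ℝ) - ((x.1 : ℝ) + 1))⁻¹) ^ p *
    (((x.2.2 : ℝ) - x.2.1)⁻¹) ^ q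

lemma sym_lim {f : ℤ → ℝ} (hf : Summable f) :
    Tendsto (fun N : ℕ => ∑ c ∈ Finset.Icc (-(N : ℤ)) N, f c) atTop (𝓝 (∑' c, f c)) := by
  refine hf.hasSum.comp (tendsto_atTop_finset_of_monotone ?_ ?_)
  · intro a b hab x hx
    simp only [Finset.mem_Icc] at hx ⊢
    omega
  · intro x
    refine ⟨x.natAbs, ?_⟩
    simp only [Finset.mem_Icc]; omega

lemma T_mem (s : ℝ) (hs : s = 1 ∨ s = -1) (p q : ℕ) (hp : 2 ≤ p) (hq : 1 ≤ q)
    (hT : Summable (T s p q)) : ∑' x, T s p q x ∈ A := by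
  obtain ⟨g, hg, H1⟩ := stage1 s hs p q (by omega) hq
  obtain ⟨h, hh, H2⟩ := stage2 s hs p (by omega) g hg
  rw [hT.tsum_prod]
  have e : ∀ n : ℕ, ∑' y, T s p q (n, y) = s ^ ((n : ℤ) + 1) * (((n : ℝ) + 1)⁻¹) ^ p * h n := by
    intro n
    have hTn := hT.prod_factor n
    rw [hTn.tsum_prod]
    have e1 : ∀ d : ℤ, ∑' c, T s p q (n, d, c) = s ^ ((n : ℤ) + 1) * (((n : ℝ) + 1)⁻¹) ^ p *
        if hd : d ≠ 0 ∧ d ≠ (n : ℤ) + 1 then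
        s ^ d * ((d : ℝ)⁻¹) ^ p * (((d : ℝ) - ((n : ℝ) + 1))⁻¹) ^ p * g ⟨(n, d), hd⟩ else 0 := by
      intro d
      split_ifs with hd
      · refine tendsto_nhds_unique (sym_lim (hTn.prod_factor d)) ?_
        rw [← mul_assoc]
        refine ((H1 ⟨(n, d), hd⟩).const_mul _).congr fun N => ?_
        rw [Finset.mul_sum]
        refine Finset.sum_congr rfl fun c _ => ?_
        simp only [T]
        ring
      · rw [mul_zero, ← tsum_zero (α := ℝ) (β := ℤ)]
        refine tsum_congr fun c => ?_
        by_cases h0 : d = 0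
        · simp [T, h0, show p ≠ 0 by omega]
        · have h1 : d = n + 1 := by by_contra h1; exact hd ⟨h0, h1⟩
          simp [T, h1, show p ≠ 0 by omega]
    refine tendsto_nhds_unique (sym_lim hTn.prod) ?_
    refine ((H2 n).const_mul _).congr fun N => ?_
    rw [Finset.mul_sum]
    exact Finset.sum_congr rfl fun d _ => (e1 d).symm
  simp only [e]
  exact (stage3 s hs p hp h hh).2

end KMT
namespace KMT
open Filter Topology

def phi : Fin 6 → ℕ × ℕ × ℕ → ℕ × ℤ × ℤ
  | 0, (x, y, z) => (x, (x + y + z + 3 : ℕ), (x + y + 2 : ℕ))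
  | 1, (x, y, z) => (z, -(y + 1 : ℕ), -(x + y + 2 : ℕ))
  | 2, (x, y, z) => (x + y + z + 2, (x + y + 2 : ℕ), (x + 1 : ℕ))
  | 3, (x, y, z) => (y, (y + z + 2 : ℕ), -(x + 1 : ℕ))
  | 4, (x, y, z) => (x + y + 1, (x + y + z + 3 : ℕ), (x + 1 : ℕ))
  | 5, (x, y, z) => (y + z + 1, (y + 1 : ℕ), -(x + 1 : ℕ))

lemma phi_lt (i : Fin 6) (t : ℕ × ℕ × ℕ) : (phi i t).2.2 < (phi i t).2.1 := by
  obtain ⟨x, y, z⟩ := t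
  fin_cases i <;> simp only [phi, Fin.reduceFinMk, Fin.zero_eta, Fin.mk_one] <;> omega

lemma phi_inj : Function.Injective (fun u : Fin 6 × (ℕ × ℕ × ℕ) => phi u.1 u.2) := by
  rintro ⟨i, x, y, z⟩ ⟨j, x', y', z'⟩ h
  fin_cases i <;> fin_cases j <;>
    simp only [phi, Fin.reduceFinMk, Fin.zero_eta, Fin.mk_one, Prod.mk.injEq] at h ⊢ <;>
    first | (exfalso; omega) | (refine ⟨trivial, ?_, ?_, ?_⟩ <;> omega)

lemma phi_cov (n : ℕ) (d c : ℤ) (h : c < d) (hc : c ≠ 0) (hd : d ≠ 0) (hc' : c ≠ n + 1)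
    (hd' : d ≠ n + 1) : ∃ i t, phi i t = (n, d, c) := by
  by_cases c0 : c < 0
  · by_cases d0 : d < 0
    · refine ⟨1, ((d - c - 1).toNat, (-d - 1).toNat, n), ?_⟩
      simp only [phi, Prod.mk.injEq, true_and]; omega
    · by_cases d1 : d < n + 1
      · refine ⟨5, ((-c - 1).toNat, (d - 1).toNat, (n - d).toNat), ?_⟩
        simp only [phi, Prod.mk.injEq, true_and]; omega
      · refine ⟨3, ((-c - 1).toNat, n, (d - n - 2).toNat), ?_⟩
        simp only [phi, Prod.mk.injEq, true_and]; omega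
  · by_cases c1 : c < n + 1
    · by_cases d1 : d < n + 1
      · refine ⟨2, ((c - 1).toNat, (d - c - 1).toNat, (n - d).toNat), ?_⟩
        simp only [phi, Prod.mk.injEq, true_and]; omega
      · refine ⟨4, ((c - 1).toNat, (n - c).toNat, (d - n - 2).toNat), ?_⟩
        simp only [phi, Prod.mk.injEq, true_and]; omega
    · refine ⟨0, (n, (c - n - 2).toNat, (d - c - 1).toNat), ?_⟩
      simp only [phi, Prod.mk.injEq, true_and]; omega

def sw (x : ℕ × ℤ × ℤ) : ℕ × ℤ × ℤ := (x.1, x.2.2, x.2.1)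

def Phi (u : (Bool × Fin 6) × (ℕ × ℕ × ℕ)) : ℕ × ℤ × ℤ :=
  if u.1.1 then phi u.1.2 u.2 else sw (phi u.1.2 u.2)

lemma Phi_inj : Function.Injective Phi := by
  rintro ⟨⟨b, i⟩, t⟩ ⟨⟨b', i'⟩, t'⟩ h
  have l1 := phi_lt i t
  have l2 := phi_lt i' t'
  have key : phi i t = phi i' t' → (i, t) = (i', t') := fun h => phi_inj h
  cases b <;> cases b' <;> simp only [Phi, sw, if_true, Bool.false_eq_true, if_false] at h
  · have : phi i t = phi i' t' := by
      simp only [Prod.mk.injEq] at h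
      exact Prod.ext h.1 (Prod.ext h.2.2 h.2.1)
    have := key this
    simp_all
  · rw [← h] at l2; simp only at l2; omega
  · rw [h] at l1; simp only at l1; omega
  · have := key h
    simp_all

noncomputable def P (t : ℕ × ℕ × ℕ) : ℝ :=
  ((t.1 : ℝ) + 1) * ((t.2.1 : ℝ) + 1) * ((t.2.2 : ℝ) + 1) * ((t.1 : ℝ) + 1 + (t.2.1 + 1)) *
    ((t.2.1 : ℝ) + 1 + (t.2.2 + 1)) * ((t.1 : ℝ) + 1 + (t.2.1 + 1) + (t.2.2 + 1))

noncomputable def V (s : ℝ) (q : ℕ) (t : ℕ × ℕ × ℕ) : ℝ :=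
  s ^ ((t.1 : ℤ) + 1 + (t.2.2 + 1)) * ((P t)⁻¹) ^ (q + 1)

noncomputable def co : Fin 6 → ℕ × ℕ × ℕ → ℝ
  | 0, (_, _, z) => (z : ℝ) + 1
  | 1, (x, _, _) => (x : ℝ) + 1
  | 2, (_, y, _) => (y : ℝ) + 1
  | 3, (x, y, z) => (x : ℝ) + 1 + (y + 1) + (z + 1)
  | 4, (_, y, z) => -((y : ℝ) + 1 + (z + 1))
  | 5, (x, y, _) => -((x : ℝ) + 1 + (y + 1))

lemma T_form (s : ℝ) (hs : s = 1 ∨ s = -1) (q : ℕ) (hq : 1 ≤ q) (n : ℕ) (d c : ℤ) :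
    T s (q + 1) q (n, d, c) = s ^ ((n : ℤ) + 1 + d + c) * ((((n : ℝ) + 1) * d * (d - (n + 1)) * c *
      (c - (n + 1)) * (c - d))⁻¹) ^ (q + 1) * (c - d) := by
  have h0 : s ≠ 0 := by rcases hs with rfl | rfl <;> norm_num
  rw [zpow_add₀ h0, zpow_add₀ h0 _ d]
  simp only [T]
  by_cases h : (c : ℝ) - d = 0
  · simp [h, show q ≠ 0 by omega]
  · have : (((c : ℝ) - d)⁻¹) ^ q = (((c : ℝ) - d)⁻¹) ^ (q + 1) * (c - d) := by
      rw [pow_succ, mul_assoc, inv_mul_cancel₀ h, mul_one]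
    rw [this]
    simp only [mul_inv, mul_pow]
    ring

lemma T_sw (s : ℝ) (q : ℕ) (hq : Even q) (x : ℕ × ℤ × ℤ) :
    T s (q + 1) q (sw x) = T s (q + 1) q x := by
  simp only [T, sw]
  rw [← neg_sub (x.2.2 : ℝ) (x.2.1 : ℝ), inv_neg, hq.neg_pow]
  ring

lemma sgn_par (s : ℝ) (hs : s = 1 ∨ s = -1) (a b c : ℤ) (h : a = b + 2 * c) : s ^ a = s ^ b := by
  have h0 : s ≠ 0 := by rcases hs with rfl | rfl <;> norm_num
  rw [h, zpow_add₀ h0, zpow_mul, show s ^ (2 : ℤ) = 1 by rcases hs with rfl | rfl <;> norm_num]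
  simp

lemma T_phi (s : ℝ) (hs : s = 1 ∨ s = -1) (q : ℕ) (hq : 1 ≤ q) (he : Even q) (i : Fin 6)
    (t : ℕ × ℕ × ℕ) : T s (q + 1) q (phi i t) = co i t * V s q t := by
  obtain ⟨x, y, z⟩ := t
  have ho : Odd (q + 1) := he.add_one
  have key : ∀ (S : ℤ) (e : ℤ) (D w k : ℝ), S = (x : ℤ) + 1 + (z + 1) + 2 * e →
      (D = P (x, y, z) ∧ w = k ∨ D = - P (x, y, z) ∧ w = -k) →
      s ^ S * (D⁻¹) ^ (q + 1) * w = k * V s q (x, y, z) := by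
    intro S e D w k h1 h2
    rw [sgn_par s hs S _ e h1]
    simp only [V]
    rcases h2 with ⟨rfl, rfl⟩ | ⟨rfl, rfl⟩
    · ring
    · rw [inv_neg, ho.neg_pow]; ring
  fin_cases i <;> simp only [phi, co, Fin.reduceFinMk, Fin.zero_eta, Fin.mk_one] <;>
    rw [T_form s hs q hq]
  · refine key _ (x + y + 2) _ _ _ (by push_cast; ring) (Or.inr ⟨?_, ?_⟩) <;> (try simp only [P]) <;>
      push_cast <;> ring
  · refine key _ (-x - y - 2) _ _ _ (by push_cast; ring) (Or.inr ⟨?_, ?_⟩) <;> (try simp only [P]) <;>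
      push_cast <;> ring
  · refine key _ (x + y + 2) _ _ _ (by push_cast; ring) (Or.inr ⟨?_, ?_⟩) <;> (try simp only [P]) <;>
      push_cast <;> ring
  · refine key _ (y - x) _ _ _ (by push_cast; ring) (Or.inr ⟨?_, ?_⟩) <;> (try simp only [P]) <;>
      push_cast <;> ring
  · refine key _ (x + y + 2) _ _ _ (by push_cast; ring) (Or.inl ⟨?_, ?_⟩) <;> (try simp only [P]) <;>
      push_cast <;> ring
  · refine key _ (y - x) _ _ _ (by push_cast; ring) (Or.inl ⟨?_, ?_⟩) <;> (try simp only [P]) <;>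
      push_cast <;> ring

lemma T_Phi (s : ℝ) (hs : s = 1 ∨ s = -1) (q : ℕ) (hq : 1 ≤ q) (he : Even q)
    (u : (Bool × Fin 6) × (ℕ × ℕ × ℕ)) :
    T s (q + 1) q (Phi u) = co u.1.2 u.2 * V s q u.2 := by
  rw [← T_phi s hs q hq he, Phi]
  split_ifs
  · rfl
  · exact T_sw s q he _

noncomputable def bd (t : ℕ × ℕ × ℕ) : ℝ :=
  (((t.1 + 1 : ℕ) : ℝ)⁻¹) ^ 2 * ((((t.2.1 + 1 : ℕ) : ℝ)⁻¹) ^ 2 * (((t.2.2 + 1 : ℕ) : ℝ)⁻¹) ^ 2)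

lemma bd_sum : Summable bd := by
  have h := sum_inv 2 le_rfl
  have h2 := h.mul_of_nonneg h (fun _ => by positivity) (fun _ => by positivity)
  exact h.mul_of_nonneg h2 (fun _ => by positivity) (fun _ => by positivity)

lemma V_bd (s : ℝ) (hs : s = 1 ∨ s = -1) (q : ℕ) (hq : 1 ≤ q) (t : ℕ × ℕ × ℕ) (k : ℝ)
    (hk : |k| ≤ (t.1 : ℝ) + 1 + (t.2.1 + 1) + (t.2.2 + 1)) : ‖k * V s q t‖ ≤ bd t := by
  obtain ⟨a, b, c⟩ := t
  simp only at hk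
  have hxa : (1 : ℝ) ≤ (a : ℝ) + 1 := by linarith [Nat.cast_nonneg (α := ℝ) a]
  have hyb : (1 : ℝ) ≤ (b : ℝ) + 1 := by linarith [Nat.cast_nonneg (α := ℝ) b]
  have hzc : (1 : ℝ) ≤ (c : ℝ) + 1 := by linarith [Nat.cast_nonneg (α := ℝ) c]
  simp only [V, bd, P]
  push_cast
  generalize (a : ℝ) + 1 = x at *
  generalize (b : ℝ) + 1 = y at *
  generalize (c : ℝ) + 1 = z at *
  have hs1 : ∀ m : ℤ, ‖s ^ m‖ = 1 := by
    intro m; rw [norm_zpow]; rcases hs with rfl | rfl <;> simp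
  set Q := x * y * z with hQ
  set R := (x + y) * (y + z) with hR
  have hQ1 : 1 ≤ Q := by
    rw [hQ]; exact one_le_mul_of_one_le_of_one_le (one_le_mul_of_one_le_of_one_le hxa hyb) hzc
  have hR1 : 1 ≤ R := by
    rw [hR]; exact one_le_mul_of_one_le_of_one_le (by linarith) (by linarith)
  have hS1 : 1 ≤ x + y + z := by linarith
  set S := x + y + z with hS
  have e : Q * (x + y) * (y + z) * S = Q * R * S := by rw [hR]; ring
  rw [e, norm_mul, norm_mul, hs1, one_mul, norm_pow, norm_inv, Real.norm_eq_abs, Real.norm_eq_abs,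
    abs_of_pos (by positivity : 0 < Q * R * S)]
  have hQRS : Q ≤ Q * R * S := by
    have : 1 ≤ R * S := one_le_mul_of_one_le_of_one_le hR1 hS1
    nlinarith
  have hi : (Q * R * S)⁻¹ ≤ Q⁻¹ := inv_anti₀ (by linarith) hQRS
  have hQi : Q⁻¹ ≤ 1 := inv_le_one_of_one_le₀ hQ1
  have h1 : (Q * R * S)⁻¹ ^ q ≤ Q⁻¹ := by
    calc (Q * R * S)⁻¹ ^ q ≤ (Q * R * S)⁻¹ ^ 1 :=
          pow_le_pow_of_le_one (by positivity) (hi.trans hQi) hq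
      _ ≤ Q⁻¹ := by simpa using hi
  have h2 : |k| * (Q * R * S)⁻¹ ≤ Q⁻¹ := by
    calc |k| * (Q * R * S)⁻¹ ≤ S * (Q * R * S)⁻¹ := by gcongr
      _ = (Q * R)⁻¹ := by field_simp
      _ ≤ Q⁻¹ := inv_anti₀ (by linarith) (by nlinarith)
  calc |k| * (Q * R * S)⁻¹ ^ (q + 1) = (Q * R * S)⁻¹ ^ q * (|k| * (Q * R * S)⁻¹) := by ring
    _ ≤ Q⁻¹ * Q⁻¹ := by gcongr
    _ = _ := by rw [hQ, mul_inv, mul_inv]; ring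

lemma co_bd (i : Fin 6) (t : ℕ × ℕ × ℕ) :
    |co i t| ≤ (t.1 : ℝ) + 1 + (t.2.1 + 1) + (t.2.2 + 1) := by
  obtain ⟨a, b, c⟩ := t
  have ha := Nat.cast_nonneg (α := ℝ) a
  have hb := Nat.cast_nonneg (α := ℝ) b
  have hc := Nat.cast_nonneg (α := ℝ) c
  rw [abs_le]
  fin_cases i <;> simp only [co, Fin.reduceFinMk, Fin.zero_eta, Fin.mk_one] <;> constructor <;>
    linarith

lemma co_sum (t : ℕ × ℕ × ℕ) : ∑ u : Bool × Fin 6, co u.2 t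
    = 2 * (((t.1 : ℝ) + 1) + ((t.2.2 : ℝ) + 1)) := by
  obtain ⟨a, b, c⟩ := t
  rw [Fintype.sum_prod_type]
  simp only [Fin.sum_univ_six, co, Fintype.sum_bool]
  ring

lemma main (s : ℝ) (hs : s = 1 ∨ s = -1) (q : ℕ) (hq : 1 ≤ q) (he : Even q) :
    ∑' t : ℕ × ℕ × ℕ, ((t.1 : ℝ) + 1) * V s q t ∈ A := by
  have hb : ∀ u, ‖T s (q + 1) q (Phi u)‖ ≤ (1 : ℝ) * bd u.2 := by
    intro u
    rw [one_mul, T_Phi s hs q hq he]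
    exact V_bd s hs q hq _ _ (co_bd _ _)
  have hbs : Summable (fun u : (Bool × Fin 6) × (ℕ × ℕ × ℕ) => (1 : ℝ) * bd u.2) :=
    (Summable.of_finite (f := fun _ : Bool × Fin 6 => (1 : ℝ))).mul_of_nonneg bd_sum
      (fun _ => zero_le_one) (fun _ => by unfold bd; positivity)
  have hsP : Summable (T s (q + 1) q ∘ Phi) := Summable.of_norm_bounded hbs hb
  have hrange : Function.support (T s (q + 1) q) ⊆ Set.range Phi := by
    rintro ⟨n, d, c⟩ hx
    rw [Function.mem_support] at hx
    have hd : d ≠ 0 := by rintro rfl; exact hx (by simp [T])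
    have hc : c ≠ 0 := by rintro rfl; exact hx (by simp [T])
    have hd' : d ≠ n + 1 := by rintro rfl; exact hx (by simp [T])
    have hc' : c ≠ n + 1 := by rintro rfl; exact hx (by simp [T])
    have hcd : c ≠ d := by rintro rfl; exact hx (by simp [T, show q ≠ 0 by omega])
    rcases lt_or_gt_of_ne hcd with h | h
    · obtain ⟨i, t, ht⟩ := phi_cov n d c h hc hd hc' hd'
      exact ⟨((true, i), t), by simp [Phi, ht]⟩
    · obtain ⟨i, t, ht⟩ := phi_cov n c d h hd hc hd' hc'
      exact ⟨((false, i), t), by simp [Phi, ht, sw]⟩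
  have hsT : Summable (T s (q + 1) q) := by
    refine (Phi_inj.summable_iff ?_).1 hsP
    intro x hx
    by_contra h
    exact hx (hrange h)
  have hmem := T_mem s hs (q + 1) q (by omega) hq hsT
  have e1 : ∑' u, T s (q + 1) q (Phi u) = ∑' x, T s (q + 1) q x := Phi_inj.tsum_eq hrange
  have hsV : ∀ i, Summable (fun t => co i t * V s q t) := fun i =>
    Summable.of_norm_bounded bd_sum fun t => V_bd s hs q hq _ _ (co_bd i t)
  have hsX : Summable (fun t : ℕ × ℕ × ℕ => ((t.1 : ℝ) + 1) * V s q t) := hsV 1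
  have hsZ : Summable (fun t : ℕ × ℕ × ℕ => ((t.2.2 : ℝ) + 1) * V s q t) := hsV 0
  have hsym : ∑' t : ℕ × ℕ × ℕ, ((t.2.2 : ℝ) + 1) * V s q t
      = ∑' t : ℕ × ℕ × ℕ, ((t.1 : ℝ) + 1) * V s q t := by
    let e : ℕ × ℕ × ℕ ≃ ℕ × ℕ × ℕ :=
      ⟨fun t => (t.2.2, t.2.1, t.1), fun t => (t.2.2, t.2.1, t.1), fun _ => rfl, fun _ => rfl⟩
    rw [← e.tsum_eq]
    refine tsum_congr fun t => ?_
    have hP : P (e t) = P t := by simp only [P, e, Equiv.coe_fn_mk]; ring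
    simp only [V, hP]
    simp only [e, Equiv.coe_fn_mk]
    rw [add_comm ((t.2.2 : ℤ) + 1)]
  have e2 : ∑' u, T s (q + 1) q (Phi u)
      = 4 * ∑' t : ℕ × ℕ × ℕ, ((t.1 : ℝ) + 1) * V s q t := by
    rw [show ∑' u, T s (q + 1) q (Phi u) = _ from Summable.tsum_prod hsP, tsum_fintype]
    simp only [T_Phi s hs q hq he]
    rw [← Summable.tsum_finsetSum (fun i _ => hsV i.2)]
    simp only [← Finset.sum_mul, co_sum]
    have e3 := hsX.tsum_add hsZ
    rw [hsym] at e3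
    simp only [← add_mul] at e3
    simp only [mul_assoc, tsum_mul_left]
    rw [e3]
    ring
  rw [← e1, e2] at hmem
  have := A.smul_mem hmem (1 / 4 : ℚ)
  rw [Rat.smul_def] at this
  convert this using 1
  push_cast
  ring

lemma Z_eq (s : ℝ) (hs : s = 1 ∨ s = -1) (k : ℕ) (w : ℕ → ℕ → ℕ → ℝ)
    (hw : ∀ l m n, w l m n = s ^ (l + n)) :
    Z3r w (2 * k) (2 * k + 1) (2 * k + 1) (2 * k + 1) (2 * k + 1) (2 * k + 1)
      = ∑' t : ℕ × ℕ × ℕ, ((t.1 : ℝ) + 1) * V s (2 * k) t := by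
  unfold Z3r
  refine tsum_congr fun t => ?_
  rw [hw, ← zpow_natCast s]
  simp only [V, P]
  push_cast
  have : (t.1 : ℝ) + 1 ≠ 0 := by positivity
  simp only [mul_inv, mul_pow, div_eq_mul_inv, inv_pow]
  rw [show (((t.1 : ℝ) + 1) ^ (2 * k))⁻¹ = ((t.1 : ℝ) + 1) * (((t.1 : ℝ) + 1) ^ (2 * k + 1))⁻¹ by
    rw [pow_succ, mul_inv]; field_simp]
  ring

end KMT
/-- Proposition 5.3 of Komori–Matsumoto–Tsumura: the values
`ζ₃((2k,2k+1,2k+1,2k+1,2k+1,2k+1),λ₂∨;SU(4))` and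
`ζ₃((2k,2k+1,2k+1,2k+1,2k+1,2k+1);A₃)` lie in the `ℚ`-algebra generated by
Riemann zeta values. -/
theorem zeta_values_in_Q_algebra (k : ℕ) (hk : 0 < k) :
    Zlam2r (2 * k) (2 * k + 1) (2 * k + 1) (2 * k + 1) (2 * k + 1) (2 * k + 1) ∈
        Algebra.adjoin ℚ zetaValues ∧
      ZA3r (2 * k) (2 * k + 1) (2 * k + 1) (2 * k + 1) (2 * k + 1) (2 * k + 1) ∈
        Algebra.adjoin ℚ zetaValues := by
  have he : Even (2 * k) := even_two_mul k
  constructor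
  · rw [Zlam2r, KMT.Z_eq (-1) (Or.inr rfl) k _ (fun _ _ _ => rfl)]
    exact KMT.main (-1) (Or.inr rfl) (2 * k) (by omega) he
  · rw [ZA3r, KMT.Z_eq 1 (Or.inl rfl) k _ (fun _ _ _ => by simp)]
    exact KMT.main 1 (Or.inl rfl) (2 * k) (by omega) he
end

section
/- For every positive integer k: (1) there exists a rational number r such that Z_{SO(6)}(2k, 2k, 2k, 2k, 2k, 2k) = r·π^{12k}; and (2) Z_{SO(6)}(2k, 2k+1, 2k+1, 2k+1, 2k+1, 2k+1) belongs to the ℚ-subalgebra of ℝ generated by the set of Riemann zeta values {ζ(j) : j an integer, j ≥ 2}. -/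
open Complex Real

/-- `ζ₃(s₁,…,s₆;SO(6))` at positive integer arguments: the sum is restricted
to `l ≡ n (mod 2)`. -/
noncomputable def ZSO6r : ℕ → ℕ → ℕ → ℕ → ℕ → ℕ → ℝ :=
  Z3r (fun l _ n => if l % 2 = n % 2 then 1 else 0)

noncomputable def EE (r : ℕ) (x : ℤ) : ℝ :=
  if r = 0 then (if x = 0 then 1 else 0) else ((x : ℝ)⁻¹) ^ r

noncomputable def sg (ε : ℤˣ) (x : ℤ) : ℝ := (((ε ^ x : ℤˣ) : ℤ) : ℝ)

noncomputable def WW (w : ℕ) : Submodule ℚ (ℤ → ℝ) :=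
  Submodule.span ℚ {f | ∃ (a b : ℕ) (ε : ℤˣ), 2 * a + b = w ∧
    f = fun n => π ^ (2 * a) * (sg ε n * EE b n)}

noncomputable def MM (w : ℕ) : Submodule ℚ (ℤ → ℤ → ℝ) :=
  Submodule.span ℚ {F | ∃ (a r : ℕ), 1 ≤ a ∧ a + r = w ∧
    ((F = fun n x => EE a n * EE r x) ∨ (F = fun n x => EE a n * EE r (n - x)))}

lemma EE_zero_idx (x : ℤ) : EE 0 x = if x = 0 then 1 else 0 := by simp [EE]

lemma EE_pos {r : ℕ} (hr : 1 ≤ r) (x : ℤ) : EE r x = ((x : ℝ)⁻¹) ^ r := by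
  simp [EE, show r ≠ 0 by omega]

lemma EE_at_zero {r : ℕ} (hr : 1 ≤ r) : EE r 0 = 0 := by
  rw [EE_pos hr]; simp [show r ≠ 0 by omega]

lemma EE_mul {r s : ℕ} (hr : 1 ≤ r) (hs : 1 ≤ s) (x : ℤ) : EE r x * EE s x = EE (r + s) x := by
  rw [EE_pos hr, EE_pos hs, EE_pos (by omega), pow_add]

lemma EE_neg (r : ℕ) (x : ℤ) : EE r (-x) = (-1) ^ r * EE r x := by
  unfold EE
  split_ifs <;> simp_all
  rw [neg_pow, inv_pow]

lemma abs_inv_int_le (x : ℤ) : |((x : ℝ)⁻¹)| ≤ 1 := by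
  rcases eq_or_ne x 0 with rfl | hx
  · simp
  · rw [abs_inv]
    apply inv_le_one_of_one_le₀
    exact_mod_cast Int.one_le_abs hx

lemma abs_EE_le_one (r : ℕ) (x : ℤ) : |EE r x| ≤ 1 := by
  unfold EE
  split_ifs
  · simp
  · simp
  · rw [abs_pow]; exact pow_le_one₀ (abs_nonneg _) (abs_inv_int_le x)

lemma EE_two_nonneg (x : ℤ) : 0 ≤ EE 2 x := by rw [EE_pos (by norm_num)]; positivity

lemma EE_zero_nonneg (x : ℤ) : 0 ≤ EE 0 x := by rw [EE_zero_idx]; split_ifs <;> norm_num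

lemma abs_EE_le_two {r : ℕ} (hr : 2 ≤ r) (x : ℤ) : |EE r x| ≤ EE 2 x := by
  rw [EE_pos (by omega), EE_pos (by norm_num), abs_pow, ← sq_abs]
  exact pow_le_pow_of_le_one (abs_nonneg _) (abs_inv_int_le x) hr

lemma EE_sq_le (r : ℕ) (x : ℤ) : EE r x ^ 2 ≤ EE 0 x + EE 2 x := by
  rcases Nat.eq_zero_or_pos r with rfl | hr
  · have := EE_two_nonneg x
    rw [EE_zero_idx]; split_ifs <;> norm_num <;> assumption
  · have := abs_EE_le_two (r := r + r) (by omega) x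
    have h0 := EE_zero_nonneg x
    rw [sq, EE_mul hr hr]
    linarith [le_abs_self (EE (r + r) x)]

lemma summable_EE_two : Summable (EE 2) := by
  have := (Real.summable_one_div_int_pow (p := 2)).2 (by norm_num)
  refine this.congr fun x => ?_
  rw [EE_pos (by norm_num)]; simp

lemma summable_EE_zero : Summable (EE 0) :=
  summable_of_ne_finset_zero (s := {0}) (by intro b hb; simp at hb; simp [EE_zero_idx, hb])

lemma summable_EE_sq (r : ℕ) : Summable (fun x => EE r x ^ 2) :=
  Summable.of_nonneg_of_le (fun _ => sq_nonneg _) (EE_sq_le r)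
    (summable_EE_zero.add summable_EE_two)

lemma summable_EE {r : ℕ} (hr : 2 ≤ r) : Summable (EE r) :=
  Summable.of_norm_bounded summable_EE_two (fun x => abs_EE_le_two hr x)

lemma sg_one (x : ℤ) : sg 1 x = 1 := by simp [sg]
lemma sg_zero (ε : ℤˣ) : sg ε 0 = 1 := by simp [sg]
lemma sg_add (ε : ℤˣ) (x y : ℤ) : sg ε (x + y) = sg ε x * sg ε y := by
  simp [sg, zpow_add]
lemma sg_neg (ε : ℤˣ) (x : ℤ) : sg ε (-x) = sg ε x := by
  simp [sg, zpow_neg]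
lemma sg_sub (ε : ℤˣ) (x y : ℤ) : sg ε (x - y) = sg ε x * sg ε y := by
  rw [sub_eq_add_neg, sg_add, sg_neg]
lemma sg_mul (ε δ : ℤˣ) (x : ℤ) : sg (ε * δ) x = sg ε x * sg δ x := by
  simp [sg, mul_zpow]
lemma sg_sq (ε : ℤˣ) (x : ℤ) : sg ε x * sg ε x = 1 := by
  rw [← sg_add, ← sg_neg, ← sg_zero ε]
  simp only [sg, zpow_neg, zpow_add, Int.units_inv_eq_self, Int.units_mul_self]; simp
lemma abs_sg (ε : ℤˣ) (x : ℤ) : |sg ε x| = 1 := by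
  have h := sg_sq ε x
  rw [← abs_mul_abs_self] at h
  nlinarith [abs_nonneg (sg ε x)]

lemma sg_neg_one (x : ℤ) : sg (-1) x = if x % 2 = 0 then 1 else -1 := by
  rcases Int.even_or_odd x with h | h
  · rw [if_pos (Int.even_iff.1 h)]; simp [sg, h.neg_one_zpow]
  · rw [if_neg (by rw [Int.odd_iff.1 h]; norm_num)]; simp [sg, h.neg_one_zpow]

lemma WW_gen (a b : ℕ) (ε : ℤˣ) : (fun n => π ^ (2 * a) * (sg ε n * EE b n)) ∈ WW (2 * a + b) :=
  Submodule.subset_span ⟨a, b, ε, rfl, rfl⟩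

lemma MM_mul {w : ℕ} {F : ℤ → ℤ → ℝ} (hF : F ∈ MM w) :
    (fun n x => EE 1 n * F n x) ∈ MM (w + 1) := by
  unfold MM at hF
  induction hF using Submodule.span_induction with
  | mem F h =>
    obtain ⟨a, r, ha, h1, h2⟩ := h
    apply Submodule.subset_span
    refine ⟨1 + a, r, by omega, by omega, ?_⟩
    rcases h2 with rfl | rfl
    · left; ext n x; rw [← EE_mul le_rfl ha]; ring
    · right; ext n x; rw [← EE_mul le_rfl ha]; ring
  | zero => convert Submodule.zero_mem _ using 1; ext; simp
  | add F G _ _ h1 h2 => convert Submodule.add_mem _ h1 h2 using 1; ext; simp [mul_add]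
  | smul q F _ h => convert Submodule.smul_mem _ q h using 1; ext; simp [Rat.smul_def]; ring

lemma MM_gen1 {a r w : ℕ} (ha : 1 ≤ a) (h : a + r = w) : (fun n x => EE a n * EE r x) ∈ MM w :=
  Submodule.subset_span ⟨a, r, ha, h, Or.inl rfl⟩
lemma MM_gen2 {a r w : ℕ} (ha : 1 ≤ a) (h : a + r = w) :
    (fun n x => EE a n * EE r (n - x)) ∈ MM w :=
  Submodule.subset_span ⟨a, r, ha, h, Or.inr rfl⟩

noncomputable def KK (i j : ℕ) (n x : ℤ) : ℝ := if n = 0 then 0 else EE i x * EE j (n - x)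

lemma KK_mem (N : ℕ) : ∀ i j : ℕ, 1 ≤ i → 1 ≤ j → i + j = N → KK i j ∈ MM N := by
  induction N with
  | zero => intro i j hi hj h; omega
  | succ N ih =>
    intro i j hi hj h
    rcases Nat.lt_or_ge 1 i with hi2 | hi2 <;> rcases Nat.lt_or_ge 1 j with hj2 | hj2
    · obtain ⟨i, rfl⟩ := Nat.exists_eq_add_of_le' hi
      obtain ⟨j, rfl⟩ := Nat.exists_eq_add_of_le' hj
      have h1 := MM_mul (Submodule.add_mem _ (ih i (j + 1) (by omega) hj (by omega))
        (ih (i + 1) j hi (by omega) (by omega)))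
      convert h1 using 1
      ext n x
      simp only [KK, Pi.add_apply]
      split_ifs with hn
      · simp
      rw [EE_pos hi, EE_pos hj, EE_pos le_rfl, EE_pos (r := i) (by omega),
        EE_pos (r := j) (by omega)]
      rcases eq_or_ne x 0 with rfl | hx
      · simp [show i ≠ 0 by omega]
      rcases eq_or_ne x n with rfl | hx2
      · simp [show j ≠ 0 by omega]
      have e1 : (n : ℝ) ≠ 0 := by exact_mod_cast hn
      have e2 : (x : ℝ) ≠ 0 := by exact_mod_cast hx
      have e3 : (n : ℝ) - x ≠ 0 := by
        rw [sub_ne_zero]; exact_mod_cast hx2.symm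
      push_cast
      simp only [pow_succ, inv_pow]
      field_simp
      ring
    · obtain rfl : j = 1 := by omega
      obtain ⟨i, rfl⟩ := Nat.exists_eq_add_of_le' hi
      have h1 := Submodule.sub_mem _ (Submodule.add_mem _ (MM_gen1 (w := N + 1) (a := 1) (r := i + 1) le_rfl (by omega))
        (MM_mul (ih i 1 (by omega) hj (by omega))))
        (MM_gen2 (w := N + 1) (a := i + 2) (r := 0) (by omega) (by omega))
      convert h1 using 1
      ext n x
      simp only [KK, Pi.add_apply, Pi.sub_apply]
      split_ifs with hn
      · simp [hn, EE_at_zero]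
      rw [EE_pos hi, EE_pos hj, EE_pos le_rfl, EE_pos (r := i) (by omega),
        EE_pos (r := i + 2) (by omega), EE_zero_idx]
      rcases eq_or_ne x 0 with rfl | hx
      · simp [show i ≠ 0 by omega, hn]
      have e1 : (n : ℝ) ≠ 0 := by exact_mod_cast hn
      have e2 : (x : ℝ) ≠ 0 := by exact_mod_cast hx
      rcases eq_or_ne x n with rfl | hx2
      · simp; ring
      have e3 : (n : ℝ) - x ≠ 0 := by
        rw [sub_ne_zero]; exact_mod_cast hx2.symm
      rw [if_neg (sub_ne_zero.2 hx2.symm)]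
      push_cast
      simp only [pow_succ, inv_pow]
      field_simp
      ring
    · obtain rfl : i = 1 := by omega
      obtain ⟨j, rfl⟩ := Nat.exists_eq_add_of_le' hj
      have h1 := Submodule.sub_mem _ (Submodule.add_mem _ (MM_gen2 (w := N + 1) (a := 1) (r := j + 1) le_rfl (by omega))
        (MM_mul (ih 1 j hi (by omega) (by omega))))
        (MM_gen1 (w := N + 1) (a := j + 2) (r := 0) (by omega) (by omega))
      convert h1 using 1
      ext n x
      simp only [KK, Pi.add_apply, Pi.sub_apply]
      split_ifs with hn
      · simp [hn, EE_at_zero]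
      rw [EE_pos hi, EE_pos hj, EE_pos le_rfl, EE_pos (r := j) (by omega),
        EE_pos (r := j + 2) (by omega), EE_zero_idx]
      have e1 : (n : ℝ) ≠ 0 := by exact_mod_cast hn
      rcases eq_or_ne x 0 with rfl | hx
      · simp; ring
      have e2 : (x : ℝ) ≠ 0 := by exact_mod_cast hx
      rcases eq_or_ne x n with rfl | hx2
      · simp [show j ≠ 0 by omega, hn]
      have e3 : (n : ℝ) - x ≠ 0 := by
        rw [sub_ne_zero]; exact_mod_cast hx2.symm
      rw [if_neg hx]
      push_cast
      simp only [pow_succ, inv_pow]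
      field_simp
      ring
    · obtain rfl : i = 1 := by omega
      obtain rfl : j = 1 := by omega
      obtain rfl : N = 1 := by omega
      have h1 := Submodule.sub_mem _ (Submodule.sub_mem _ (Submodule.add_mem _
        (MM_gen1 (w := 1 + 1) (a := 1) (r := 1) le_rfl rfl)
        (MM_gen2 (w := 1 + 1) (a := 1) (r := 1) le_rfl rfl))
        (MM_gen1 (w := 1 + 1) (a := 2) (r := 0) (by omega) rfl))
        (MM_gen2 (w := 1 + 1) (a := 2) (r := 0) (by omega) rfl)
      convert h1 using 1
      ext n x
      simp only [KK, Pi.add_apply, Pi.sub_apply]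
      split_ifs with hn
      · simp [hn, EE_at_zero]
      rw [EE_pos hi, EE_pos hi, EE_pos le_rfl, EE_pos (r := 2) (by omega), EE_zero_idx, EE_zero_idx]
      have e1 : (n : ℝ) ≠ 0 := by exact_mod_cast hn
      rcases eq_or_ne x 0 with rfl | hx
      · simp [hn]; ring
      have e2 : (x : ℝ) ≠ 0 := by exact_mod_cast hx
      rcases eq_or_ne x n with rfl | hx2
      · simp [hn]; ring
      have e3 : (n : ℝ) - x ≠ 0 := by
        rw [sub_ne_zero]; exact_mod_cast hx2.symm
      rw [if_neg hx, if_neg (sub_ne_zero.2 hx2.symm)]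
      push_cast
      simp only [pow_succ, inv_pow]
      field_simp
      ring

lemma hs_eq {β : Type*} {L : SummationFilter β} {f g : β → ℝ} {a b : ℝ} (h : HasSum f a L)
    (h1 : ∀ x, g x = f x) (h2 : b = a) : HasSum g b L := by
  rw [h2, show g = f from funext h1]; exact h

open SummationFilter Filter Topology in
lemma hasSum_shift_one {f : ℤ → ℝ} {c : ℝ} (hf : Tendsto f cofinite (𝓝 0))
    (h : HasSum f c (symmetricIcc ℤ)) : HasSum (fun x => f (x + 1)) c (symmetricIcc ℤ) := by
  rw [hasSum_symmetricIcc_iff] at h ⊢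
  have e : ∀ N : ℕ, ∑ n ∈ Finset.Icc (-(N : ℤ)) N, f (n + 1) =
      ∑ n ∈ Finset.Icc (-(N : ℤ)) N, f n + (f (N + 1) - f (-N)) := by
    intro N
    have h1 : ∑ n ∈ Finset.Icc (-(N : ℤ)) N, f (n + 1) =
        ∑ n ∈ Finset.Icc (-(N : ℤ) + 1) (N + 1), f n := by
      rw [← Finset.map_add_right_Icc, Finset.sum_map]; rfl
    have h2 : Finset.Icc (-(N : ℤ)) (N + 1) = insert (-(N : ℤ)) (Finset.Icc (-(N : ℤ) + 1) (N + 1)) := by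
      ext x; simp; omega
    have h3 : Finset.Icc (-(N : ℤ)) (N + 1) = insert ((N : ℤ) + 1) (Finset.Icc (-(N : ℤ)) N) := by
      ext x; simp; omega
    have h4 : ∑ n ∈ insert (-(N : ℤ)) (Finset.Icc (-(N : ℤ) + 1) (N + 1)), f n =
        ∑ n ∈ insert ((N : ℤ) + 1) (Finset.Icc (-(N : ℤ)) N), f n := congrArg (fun s => ∑ n ∈ s, f n) (h2.symm.trans h3)
    rw [Finset.sum_insert (by simp), Finset.sum_insert (by simp)] at h4
    linarith
  simp_rw [e]
  have t1 : Tendsto (fun N : ℕ => f ((N : ℤ) + 1)) atTop (𝓝 0) := by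
    refine hf.comp ?_
    rw [← Nat.cofinite_eq_atTop]
    exact Function.Injective.tendsto_cofinite (fun a b hab => by simpa using hab)
  have t2 : Tendsto (fun N : ℕ => f (-(N : ℤ))) atTop (𝓝 0) := by
    refine hf.comp ?_
    rw [← Nat.cofinite_eq_atTop]
    exact Function.Injective.tendsto_cofinite (fun a b hab => by simpa using hab)
  simpa using h.add (t1.sub t2)

open SummationFilter Filter Topology in
lemma hasSum_shift_nat {f : ℤ → ℝ} {c : ℝ} (hf : Tendsto f cofinite (𝓝 0))
    (h : HasSum f c (symmetricIcc ℤ)) (n : ℕ) :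
    HasSum (fun x => f (x + n)) c (symmetricIcc ℤ) := by
  induction n with
  | zero => simpa using h
  | succ n ih =>
    have := hasSum_shift_one (f := fun x => f (x + n))
      (hf.comp (Function.Injective.tendsto_cofinite (fun a b hab => by simpa using hab))) ih
    refine this.congr_fun ?_ 
    intro x; push_cast; congr 1; ring

open SummationFilter Filter Topology in
lemma hasSum_neg_sym {f : ℤ → ℝ} {c : ℝ} 
    (h : HasSum f c (symmetricIcc ℤ)) :
    HasSum (fun x => f (-x)) c (symmetricIcc ℤ) := by
  rw [hasSum_symmetricIcc_iff] at h ⊢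
  refine h.congr fun N => ?_
  refine Finset.sum_nbij' (fun x => -x) (fun x => -x) ?_ ?_ ?_ ?_ ?_ <;> simp
  all_goals intros; omega

open SummationFilter Filter Topology in
lemma hasSum_refl_shift {f : ℤ → ℝ} {c : ℝ} (hf : Tendsto f cofinite (𝓝 0))
    (h : HasSum f c (symmetricIcc ℤ)) (n : ℤ) :
    HasSum (fun x => f (n - x)) c (symmetricIcc ℤ) := by
  rcases Int.eq_nat_or_neg n with ⟨m, rfl | rfl⟩
  · convert hasSum_neg_sym (hasSum_shift_nat hf h m) using 2
    ring_nf
  · convert hasSum_shift_nat (f := fun x => f (-x))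
      (hf.comp (Function.Injective.tendsto_cofinite neg_injective)) (hasSum_neg_sym h) m using 2
    ring_nf

open SummationFilter Filter Topology in
lemma tendsto_sgEE (ε : ℤˣ) (r : ℕ) : Tendsto (fun x => sg ε x * EE r x) cofinite (𝓝 0) := by
  have h := (summable_EE_sq r).tendsto_cofinite_zero
  have h2 := h.sqrt
  rw [Real.sqrt_zero] at h2
  refine squeeze_zero_norm (fun x => ?_) h2
  rw [Real.norm_eq_abs, abs_mul, abs_sg, one_mul, Real.sqrt_sq_eq_abs]

/-- The real zeta sum. -/
noncomputable def zr (r : ℕ) : ℝ := ∑' n : ℕ, EE r ((n : ℤ) + 1)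

lemma summable_EE_nat {r : ℕ} (hr : 2 ≤ r) : Summable (fun n : ℕ => EE r ((n : ℤ) + 1)) :=
  (summable_EE hr).comp_injective (i := fun n : ℕ => (n : ℤ) + 1) (fun a b hab => by simpa using hab)

lemma hasSum_zr {r : ℕ} (hr : 2 ≤ r) : HasSum (fun n : ℕ => EE r n) (zr r) := by
  have h := (summable_EE_nat hr).hasSum
  have := (hasSum_nat_add_iff (f := fun n : ℕ => EE r n) 1 (g := zr r)).1 (by
    simpa using! h)
  simpa [EE_at_zero (show 1 ≤ r by omega)] using this

lemma zr_zeta {r : ℕ} (hr : 2 ≤ r) : ((zr r : ℝ) : ℂ) = riemannZeta r := by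
  rw [zeta_nat_eq_tsum_of_gt_one (by omega), ← (hasSum_zr hr).tsum_eq, Complex.ofReal_tsum]
  congr 1; ext n
  rw [EE_pos (by omega)]; simp

lemma zr_even {k : ℕ} (hk : k ≠ 0) : ∃ q : ℚ, zr (2 * k) = q * π ^ (2 * k) := by
  have h := hasSum_zeta_nat hk
  have h2 := hasSum_zr (r := 2 * k) (by omega)
  have : zr (2 * k) = _ := h2.unique (h.congr_fun (fun n => by rw [EE_pos (by omega)]; simp))
  refine ⟨(-1) ^ (k + 1) * 2 ^ (2 * k - 1) * bernoulli (2 * k) / (2 * k).factorial, ?_⟩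
  rw [this]; push_cast; ring

lemma hasSum_sg_zr (ε : ℤˣ) {r : ℕ} (hr : 2 ≤ r) :
    ∃ q : ℚ, HasSum (fun n : ℕ => sg ε n * EE r n) (q * zr r) := by
  rcases Int.units_eq_one_or ε with rfl | rfl
  · refine ⟨1, ?_⟩
    simpa [sg_one] using hasSum_zr hr
  · refine ⟨2 * (1 / 2) ^ r - 1, ?_⟩
    have h1 := hasSum_zr hr
    have h2 : HasSum (fun n : ℕ => if n % 2 = 0 then EE r n else 0) ((1 / 2) ^ r * zr r) := by
      rw [← Function.Injective.hasSum_iff (g := fun n : ℕ => 2 * n)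
        (fun a b hab => by simpa using hab)]
      · refine (h1.mul_left ((1 / 2) ^ r)).congr_fun (fun n => ?_)
        simp only [Function.comp, Nat.mul_mod_right, if_true]
        rw [EE_pos (by omega), EE_pos (by omega)]
        push_cast
        rw [mul_inv, mul_pow]; norm_num
      · intro x hx
        rw [if_neg]
        intro h; exact hx ⟨x / 2, by simp; omega⟩
    refine hs_eq ((h2.mul_left 2).sub h1) (fun n => ?_) ?_
    · rw [sg_neg_one]
      have : ((n : ℤ) % 2 = 0) ↔ n % 2 = 0 := by omega
      simp only [this]
      split_ifs <;> ring
    · push_cast; ring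

open SummationFilter in
lemma hasSum_c (ε : ℤˣ) (r : ℕ) : ∃ q : ℚ, (Odd r → q = 0) ∧
    HasSum (fun x => sg ε x * EE r x) (q * π ^ r) (symmetricIcc ℤ) := by
  rcases Nat.even_or_odd r with hr | hr
  · obtain ⟨k, rfl⟩ := hr
    rw [← two_mul]
    rcases Nat.eq_zero_or_pos k with rfl | hk
    · refine ⟨1, fun h => by simp at h, ?_⟩
      have : HasSum (fun x => sg ε x * EE 0 x) (sg ε 0 * EE 0 0) (symmetricIcc ℤ) :=
        hasSum_single (f := fun x => sg ε x * EE 0 x) 0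
          (fun b hb => by simp [EE_zero_idx, hb]) (symmetricIcc ℤ)
      simpa [sg_zero, EE_zero_idx] using this
    · obtain ⟨q, hq⟩ := zr_even (k := k) (by omega)
      obtain ⟨p, hp⟩ := hasSum_sg_zr ε (r := 2 * k) (by omega)
      refine ⟨2 * (p * q), fun h => by exfalso; revert h; simp, ?_⟩
      have h := HasSum.of_nat_of_neg (f := fun x => sg ε x * EE (2 * k) x) hp (hp.congr_fun (fun n => by
        rw [sg_neg, EE_neg]; simp))
      have h' : HasSum (fun x => sg ε x * EE (2 * k) x) _ (symmetricIcc ℤ) :=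
        Filter.Tendsto.mono_left h (symmetricIcc ℤ).le_atTop
      convert h' using 1
      rw [EE_at_zero (by omega), hq]; push_cast; ring
  · refine ⟨0, fun _ => rfl, ?_⟩
    rw [hasSum_symmetricIcc_iff]
    simp only [Rat.cast_zero, zero_mul]
    convert tendsto_const_nhds using 2 with N
    have : ∑ n ∈ Finset.Icc (-(N : ℤ)) N, sg ε n * EE r n = 
      ∑ n ∈ Finset.Icc (-(N : ℤ)) N, -(sg ε n * EE r n) := by
      refine Finset.sum_nbij' (fun x => -x) (fun x => -x) ?_ ?_ ?_ ?_ ?_ <;> simp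
      · intros; omega
      · intros; omega
      · intros; rw [sg_neg, EE_neg, hr.neg_one_pow]; ring
    rw [Finset.sum_neg_distrib] at this
    linarith

lemma WW_sg (δ : ℤˣ) {w : ℕ} {f : ℤ → ℝ} (hf : f ∈ WW w) : (fun n => sg δ n * f n) ∈ WW w := by
  unfold WW at hf
  induction hf using Submodule.span_induction with
  | mem F h =>
    obtain ⟨a, b, ε, h1, rfl⟩ := h
    exact Submodule.subset_span ⟨a, b, δ * ε, h1, by ext n; rw [sg_mul]; ring⟩
  | zero => convert Submodule.zero_mem _ using 1; ext; simp
  | add F G _ _ h1 h2 => convert Submodule.add_mem _ h1 h2 using 1; ext; simp [mul_add]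
  | smul q F _ h => convert Submodule.smul_mem _ q h using 1; ext; simp [Rat.smul_def]; ring

lemma WW_pi (c : ℕ) {w : ℕ} {f : ℤ → ℝ} (hf : f ∈ WW w) :
    (fun n => π ^ (2 * c) * f n) ∈ WW (2 * c + w) := by
  unfold WW at hf
  induction hf using Submodule.span_induction with
  | mem F h =>
    obtain ⟨a, b, ε, h1, rfl⟩ := h
    exact Submodule.subset_span ⟨c + a, b, ε, by omega, by ext n; rw [mul_add, pow_add]; ring⟩
  | zero => convert Submodule.zero_mem _ using 1; ext; simp
  | add F G _ _ h1 h2 => convert Submodule.add_mem _ h1 h2 using 1; ext; simp [mul_add]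
  | smul q F _ h => convert Submodule.smul_mem _ q h using 1; ext; simp [Rat.smul_def]; ring

lemma WW_EE {c : ℕ} (hc : 1 ≤ c) {w : ℕ} {f : ℤ → ℝ} (hf : f ∈ WW w) :
    (fun n => EE c n * f n) ∈ WW (c + w) := by
  unfold WW at hf
  induction hf using Submodule.span_induction with
  | mem F h =>
    obtain ⟨a, b, ε, h1, rfl⟩ := h
    rcases Nat.eq_zero_or_pos b with rfl | hb
    · convert Submodule.zero_mem _ using 1
      ext n
      beta_reduce
      rw [EE_zero_idx]
      split_ifs with h
      · simp [h, EE_at_zero hc]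
      · simp
    · exact Submodule.subset_span ⟨a, c + b, ε, by omega, by ext n; rw [← EE_mul hc hb]; ring⟩
  | zero => convert Submodule.zero_mem _ using 1; ext; simp
  | add F G _ _ h1 h2 => convert Submodule.add_mem _ h1 h2 using 1; ext; simp [mul_add]
  | smul q F _ h => convert Submodule.smul_mem _ q h using 1; ext; simp [Rat.smul_def]; ring

lemma WW_c {r b : ℕ} {q : ℚ} (hq : Odd r → q = 0) (ε : ℤˣ) :
    (fun n => (q * π ^ r) * (sg ε n * EE b n)) ∈ WW (b + r) := by
  rcases Nat.even_or_odd r with hr | hr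
  · obtain ⟨k, rfl⟩ := hr
    have := Submodule.smul_mem _ q (WW_gen k b ε)
    rw [show b + (k + k) = 2 * k + b by ring]
    convert this using 1
    ext n; simp only [Pi.smul_apply, Rat.smul_def]; rw [← two_mul]; ring
  · rw [hq hr]
    convert Submodule.zero_mem _ using 1; ext; simp

/-- value at zero of an element of `WW`. -/
lemma WW_at_zero {w : ℕ} {f : ℤ → ℝ} (hf : f ∈ WW w) :
    ∃ q : ℚ, (Odd w → q = 0) ∧ f 0 = q * π ^ w := by
  unfold WW at hf
  induction hf using Submodule.span_induction with
  | mem F h =>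
    obtain ⟨a, b, ε, h1, rfl⟩ := h
    rcases Nat.eq_zero_or_pos b with rfl | hb
    · refine ⟨1, fun h => ?_, ?_⟩
      · exfalso; rw [← h1] at h; revert h; simp
      · subst h1; simp [EE_zero_idx, sg_zero]
    · exact ⟨0, fun _ => rfl, by simp [EE_at_zero hb]⟩
  | zero => exact ⟨0, fun _ => rfl, by simp⟩
  | add F G _ _ h1 h2 =>
    obtain ⟨q1, a1, b1⟩ := h1
    obtain ⟨q2, a2, b2⟩ := h2
    exact ⟨q1 + q2, fun h => by rw [a1 h, a2 h]; simp, by simp [b1, b2, add_mul]⟩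
  | smul q F _ h =>
    obtain ⟨q1, a1, b1⟩ := h
    exact ⟨q * q1, fun h => by rw [a1 h]; simp, by simp [b1, Rat.smul_def]; ring⟩

open SummationFilter in
lemma sumM (ε : ℤˣ) {w : ℕ} {F : ℤ → ℤ → ℝ} (hF : F ∈ MM w) :
    ∃ g ∈ WW w, ∀ n, HasSum (fun x => sg ε x * F n x) (g n) (symmetricIcc ℤ) := by
  unfold MM at hF
  induction hF using Submodule.span_induction with
  | mem F h =>
    obtain ⟨a, r, ha, h1, h2⟩ := h
    obtain ⟨q, hq, hs⟩ := hasSum_c ε r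
    subst h1
    rcases h2 with rfl | rfl
    · refine ⟨_, WW_c (b := a) hq 1, fun n => ?_⟩
      exact hs_eq (hs.mul_left (EE a n)) (fun x => by ring) (by rw [sg_one]; ring)
    · refine ⟨_, WW_c (b := a) hq ε, fun n => ?_⟩
      have := hasSum_refl_shift (tendsto_sgEE ε r) hs n
      refine hs_eq (this.mul_left (sg ε n * EE a n)) (fun x => ?_) (by ring)
      rw [sg_sub]
      linear_combination (-sg ε x * EE a n * EE r (n - x)) * sg_sq ε n
  | zero => exact ⟨0, Submodule.zero_mem _, fun n => by simp⟩
  | add F G _ _ h1 h2 =>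
    obtain ⟨g1, a1, b1⟩ := h1
    obtain ⟨g2, a2, b2⟩ := h2
    exact ⟨g1 + g2, Submodule.add_mem _ a1 a2, fun n =>
      hs_eq ((b1 n).add (b2 n)) (fun x => by simp [mul_add]) (by simp)⟩
  | smul q F _ h =>
    obtain ⟨g, a, b⟩ := h
    exact ⟨q • g, Submodule.smul_mem _ q a, fun n =>
      hs_eq ((b n).mul_left (q : ℝ)) (fun x => by simp [Rat.smul_def]; ring)
        (by simp [Rat.smul_def])⟩

lemma summable_conv (ε : ℤˣ) (i j : ℕ) (n : ℤ) :
    Summable (fun x => sg ε x * (EE i x * EE j (n - x))) := by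
  have h1 := summable_EE_sq i
  have h2 := (summable_EE_sq j).comp_injective (i := fun x => n - x)
    (fun a b hab => by simpa using hab)
  refine Summable.of_norm_bounded (h1.add h2) (fun x => ?_)
  rw [Real.norm_eq_abs, abs_mul, abs_sg, one_mul, abs_mul]
  simp only [Function.comp]
  rw [← sq_abs (EE i x), ← sq_abs (EE j (n - x))]
  nlinarith [sq_nonneg (|EE i x| - |EE j (n - x)|), sq_nonneg (EE i x), sq_nonneg (|EE j (n - x)|), sq_nonneg (|EE i x|)]

open SummationFilter in
lemma conv_sum (ε : ℤˣ) {i j : ℕ} (hi : 1 ≤ i) (hj : 1 ≤ j) :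
    ∃ g ∈ WW (i + j), ∀ n, HasSum (fun x => sg ε x * (EE i x * EE j (n - x))) (g n) := by
  obtain ⟨g1, a1, b1⟩ := sumM ε (KK_mem (i + j) i j hi hj rfl)
  obtain ⟨q, hq, hs⟩ := hasSum_c ε (i + j)
  have hc := WW_c (b := 0) (q := (-1) ^ j * q) (r := i + j) (fun h => by simp [hq h]) 1
  rw [zero_add] at hc
  refine ⟨_, Submodule.add_mem _ a1 hc, fun n => ?_⟩
  have h1 := (b1 n).add (hs.mul_left ((-1) ^ j * EE 0 n))
  have h2 := (summable_conv ε i j n).hasSum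
  have h3 : HasSum _ _ (symmetricIcc ℤ) := Filter.Tendsto.mono_left h2 (symmetricIcc ℤ).le_atTop
  have h4 := h3.unique (hs_eq h1 (fun x => ?_) rfl)
  · rw [h4] at h2
    refine hs_eq h2 (fun x => rfl) ?_
    simp only [Pi.add_apply, sg_one]; push_cast; ring
  · rw [EE_zero_idx, KK]
    split_ifs with h
    · rw [h, zero_sub, EE_neg, ← EE_mul hi hj]; ring
    · ring

lemma conv_W (j : ℕ) {v : ℕ} {f : ℤ → ℝ} (hf : f ∈ WW v) :
    ∃ g ∈ WW (v + j), ∀ n, HasSum (fun y => EE j y * f (n - y)) (g n) := by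
  have hf0 := hf
  unfold WW at hf
  rcases Nat.eq_zero_or_pos j with rfl | hj
  · refine ⟨f, hf, fun n => ?_⟩
    have := hasSum_single (f := fun y => EE 0 y * f (n - y)) 0
          (fun b hb => by simp [EE_zero_idx, hb])
    simpa [EE_zero_idx] using this
  clear hf0
  induction hf using Submodule.span_induction with
  | mem F h =>
    obtain ⟨a, b, ε, h1, rfl⟩ := h
    rcases Nat.eq_zero_or_pos b with rfl | hb
    · subst h1
      refine ⟨_, WW_gen a j 1, fun n => ?_⟩
      have := hasSum_single (f := fun y => EE j y * (π ^ (2 * a) * (sg ε (n - y) * EE 0 (n - y)))) n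
          (fun b hb => by simp [EE_zero_idx, sub_eq_zero, hb.symm])
      refine hs_eq this (fun _ => rfl) ?_
      simp [EE_zero_idx, sg_zero, sg_one]; ring
    · obtain ⟨g, hg, hs⟩ := conv_sum ε hj hb
      subst h1
      refine ⟨_, by
        rw [show 2 * a + b + j = 2 * a + (j + b) by ring]; exact WW_pi a (WW_sg ε hg), fun n => ?_⟩
      refine hs_eq ((hs n).mul_left (π ^ (2 * a) * sg ε n)) (fun x => ?_) (by ring)
      beta_reduce
      rw [sg_sub]; ring
  | zero => exact ⟨0, Submodule.zero_mem _, fun n => by simp⟩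
  | add F G _ _ h1 h2 =>
    obtain ⟨g1, a1, b1⟩ := h1
    obtain ⟨g2, a2, b2⟩ := h2
    exact ⟨g1 + g2, Submodule.add_mem _ a1 a2, fun n =>
      hs_eq ((b1 n).add (b2 n)) (fun x => by simp [mul_add]) (by simp)⟩
  | smul q F _ h =>
    obtain ⟨g, a, b⟩ := h
    exact ⟨q • g, Submodule.smul_mem _ q a, fun n =>
      hs_eq ((b n).mul_left (q : ℝ)) (fun x => by simp [Rat.smul_def]; ring)
        (by simp [Rat.smul_def])⟩

lemma summable_trip (ε : ℤˣ) {q : ℕ} (hq : 2 ≤ q) (i j : ℕ) (n : ℤ) :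
    Summable (fun z : ℤ × ℤ => sg ε (n - z.1 - z.2) * EE q (n - z.1 - z.2) * EE j z.1 * EE i z.2) := by
  have h1 := (summable_EE_two.mul_of_nonneg (summable_EE_sq i) (fun x => EE_two_nonneg x)
    (fun x => sq_nonneg _)).comp_injective (i := fun z : ℤ × ℤ => (n - z.1 - z.2, z.2)) (by
      rintro ⟨a, b⟩ ⟨c, d⟩ h; simp at h ⊢; omega)
  have h2 := (summable_EE_two.mul_of_nonneg (summable_EE_sq j) (fun x => EE_two_nonneg x)
    (fun x => sq_nonneg _)).comp_injective (i := fun z : ℤ × ℤ => (n - z.1 - z.2, z.1)) (by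
      rintro ⟨a, b⟩ ⟨c, d⟩ h; simp at h ⊢; omega)
  refine Summable.of_norm_bounded (h1.add h2) (fun z => ?_)
  simp only [Function.comp]
  rw [Real.norm_eq_abs, abs_mul, abs_mul, abs_mul, abs_sg, one_mul, ← mul_add, mul_assoc]
  refine mul_le_mul (abs_EE_le_two hq _) ?_ (by positivity) (EE_two_nonneg _)
  rw [← sq_abs (EE i z.2), ← sq_abs (EE j z.1)]
  nlinarith [sq_nonneg (|EE i z.2| - |EE j z.1|), sq_nonneg (|EE j z.1|), sq_nonneg (|EE i z.2|)]

lemma trip (ε : ℤˣ) {q : ℕ} (hq : 2 ≤ q) (i j : ℕ) :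
    ∃ g ∈ WW (q + i + j), ∀ n, HasSum (fun z : ℤ × ℤ =>
      sg ε (n - z.1 - z.2) * EE q (n - z.1 - z.2) * EE j z.1 * EE i z.2) (g n) := by
  have h0 := WW_gen 0 q ε
  simp only [mul_zero, pow_zero, one_mul, zero_add] at h0
  obtain ⟨g1, a1, b1⟩ := conv_W i h0
  obtain ⟨g2, a2, b2⟩ := conv_W j a1
  refine ⟨g2, a2, fun n => ?_⟩
  have h := (summable_trip ε hq i j n).hasSum
  have h2 := h.prod_fiberwise (g := fun y => EE j y * g1 (n - y)) (fun y =>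
    hs_eq ((b1 (n - y)).mul_left (EE j y)) (fun x => by ring) rfl)
  rw [(b2 n).unique h2]
  exact h

lemma bil (ε : ℤˣ) {q : ℕ} (hq : 2 ≤ q) (hqe : Even q) {v v' : ℕ} {F F' : ℤ → ℤ → ℝ}
    (hF : F ∈ MM v) (hF' : F' ∈ MM v') :
    ∃ g ∈ WW (q + v + v'), ∀ n, HasSum (fun z : ℤ × ℤ =>
      sg ε (z.1 - z.2) * EE q (z.1 - z.2) * F n z.1 * F' n z.2) (g n) := by
  have ev : ∀ x : ℤ, EE q (-x) = EE q x := fun x => by rw [EE_neg, hqe.neg_one_pow, one_mul]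
  unfold MM at hF
  induction hF using Submodule.span_induction with
  | mem F h =>
    obtain ⟨a, i, ha, h1, h2⟩ := h
    subst h1
    unfold MM at hF'
    induction hF' using Submodule.span_induction with
    | mem F' h' =>
      obtain ⟨a', j, ha', h1', h2'⟩ := h'
      subst h1'
      obtain ⟨g, hg, hs⟩ := trip ε hq j i
      obtain ⟨p, hp, hz⟩ := WW_at_zero hg
      have hdiag := WW_c (b := a + a') (q := (-1) ^ j * p) (r := q + j + i)
        (fun h => by simp [hp h]) 1
      rw [show a + a' + (q + j + i) = q + (a + i) + (a' + j) by ring] at hdiag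
      have hoff := WW_EE (c := a + a') (by omega) hg
      rw [show a + a' + (q + j + i) = q + (a + i) + (a' + j) by ring] at hoff
      have h0 := hs 0
      rcases h2 with rfl | rfl <;> rcases h2' with rfl | rfl
      · refine ⟨_, hdiag, fun n => ?_⟩
        have := (Equiv.hasSum_iff (Equiv.prodCongr (Equiv.refl ℤ) (Equiv.neg ℤ))).2 h0
        refine hs_eq (this.mul_left ((-1) ^ j * EE (a + a') n)) (fun z => ?_) ?_
        · simp only [Function.comp, Equiv.prodCongr_apply, Prod.map, Equiv.refl_apply,
            Equiv.neg_apply, EE_neg j]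
          rw [show (0 : ℤ) - z.1 - -z.2 = -(z.1 - z.2) by ring, sg_neg, ev, ← EE_mul ha ha']
          have : ((-1 : ℝ) ^ j) * (-1) ^ j = 1 := by rw [← mul_pow]; simp
          linear_combination (-(EE a n * EE a' n * sg ε (z.1 - z.2) * EE q (z.1 - z.2) * EE i z.1 * EE j z.2)) * this
        · rw [hz, sg_one]; push_cast; ring
      · refine ⟨_, hoff, fun n => ?_⟩
        have := (Equiv.hasSum_iff (Equiv.prodCongr (Equiv.refl ℤ) (Equiv.subLeft n))).2 (hs n)
        refine hs_eq (this.mul_left (EE (a + a') n)) (fun z => ?_) rfl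
        simp only [Function.comp, Equiv.prodCongr_apply, Prod.map, Equiv.refl_apply,
            Equiv.subLeft_apply]
        rw [show n - z.1 - (n - z.2) = -(z.1 - z.2) by ring, sg_neg, ev, ← EE_mul ha ha']
        ring
      · refine ⟨_, hoff, fun n => ?_⟩
        have := (Equiv.hasSum_iff (Equiv.prodCongr (Equiv.subLeft n) (Equiv.refl ℤ))).2 (hs n)
        refine hs_eq (this.mul_left (EE (a + a') n)) (fun z => ?_) rfl
        simp only [Function.comp, Equiv.prodCongr_apply, Prod.map, Equiv.refl_apply,
            Equiv.subLeft_apply]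
        rw [show n - (n - z.1) - z.2 = (z.1 - z.2) by ring, ← EE_mul ha ha']
        ring
      · refine ⟨_, hdiag, fun n => ?_⟩
        have := (Equiv.hasSum_iff (Equiv.prodCongr (Equiv.subLeft n)
          ((Equiv.subLeft n).trans (Equiv.neg ℤ)))).2 h0
        refine hs_eq (this.mul_left ((-1) ^ j * EE (a + a') n)) (fun z => ?_) ?_
        · simp only [Function.comp, Equiv.prodCongr_apply, Prod.map, Equiv.trans_apply,
            Equiv.neg_apply, Equiv.subLeft_apply, EE_neg j]
          rw [show (0 : ℤ) - (n - z.1) - -(n - z.2) = (z.1 - z.2) by ring, ← EE_mul ha ha']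
          have : ((-1 : ℝ) ^ j) * (-1) ^ j = 1 := by rw [← mul_pow]; simp
          linear_combination (-(EE a n * EE a' n * sg ε (z.1 - z.2) * EE q (z.1 - z.2) * EE i (n - z.1) * EE j (n - z.2))) * this
        · rw [hz, sg_one]; push_cast; ring
    | zero => exact ⟨0, Submodule.zero_mem _, fun n => by simp⟩
    | add F G _ _ h1 h2 =>
      obtain ⟨g1, a1, b1⟩ := h1
      obtain ⟨g2, a2, b2⟩ := h2
      exact ⟨g1 + g2, Submodule.add_mem _ a1 a2, fun n =>
        hs_eq ((b1 n).add (b2 n)) (fun x => by simp [mul_add]) (by simp)⟩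
    | smul q F _ h =>
      obtain ⟨g, a, b⟩ := h
      exact ⟨q • g, Submodule.smul_mem _ q a, fun n =>
        hs_eq ((b n).mul_left (q : ℝ)) (fun x => by simp [Rat.smul_def]; ring)
          (by simp [Rat.smul_def])⟩
  | zero => exact ⟨0, Submodule.zero_mem _, fun n => by simp⟩
  | add F G _ _ h1 h2 =>
    obtain ⟨g1, a1, b1⟩ := h1
    obtain ⟨g2, a2, b2⟩ := h2
    exact ⟨g1 + g2, Submodule.add_mem _ a1 a2, fun n =>
      hs_eq ((b1 n).add (b2 n)) (fun x => by simp; ring) (by simp)⟩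
  | smul q F _ h =>
    obtain ⟨g, a, b⟩ := h
    exact ⟨q • g, Submodule.smul_mem _ q a, fun n =>
      hs_eq ((b n).mul_left (q : ℝ)) (fun x => by simp [Rat.smul_def]; ring)
        (by simp [Rat.smul_def])⟩

noncomputable def wt (x : ℤ) : ℝ := if x % 2 = 0 then 1 else 0

lemma wt_eq (x y d : ℤ) : wt (x - y - d) =
    (1 / 2) * (sg 1 (x - y) + sg (-1) d * sg (-1) (x - y)) := by
  rw [← sg_add, sg_one, sg_neg_one, wt]
  have : (d + (x - y)) % 2 = 0 ↔ (x - y - d) % 2 = 0 := by omega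
  simp only [this]
  split_ifs <;> norm_num

lemma inner_sum_ff {q p : ℕ} (hq : 2 ≤ q) (hqe : Even q) (hp : 1 ≤ p) :
    ∃ g ∈ WW (q + (p + p) + (p + p)), ∀ d : ℤ, d ≠ 0 → HasSum (fun z : ℤ × ℤ =>
      wt (z.1 - z.2 - d) * (EE q (z.1 - z.2) * (EE p z.1 * EE p (d - z.1)) *
        (EE p z.2 * EE p (d - z.2)))) (g d) := by
  have hK := KK_mem (p + p) p p hp hp rfl
  obtain ⟨g1, a1, b1⟩ := bil 1 hq hqe hK hK
  obtain ⟨g2, a2, b2⟩ := bil (-1) hq hqe hK hK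
  refine ⟨_, Submodule.smul_mem _ (1 / 2 : ℚ) (Submodule.add_mem _ a1 (WW_sg (-1) a2)),
    fun d hd => ?_⟩
  refine hs_eq (((b1 d).add ((b2 d).mul_left (sg (-1) d))).mul_left (1 / 2)) (fun z => ?_) ?_
  · rw [wt_eq]; simp only [KK, if_neg hd]; ring
  · simp [Rat.smul_def]; ring

noncomputable def UU (s w : ℕ) : Submodule ℚ ℝ :=
  Submodule.span ℚ {x | ∃ a b : ℕ, 2 * a + b = w ∧ x = π ^ (2 * a) * zr (b + s)}

lemma outer_sum {s : ℕ} (hs : 2 ≤ s) {w : ℕ} {f : ℤ → ℝ} (hf : f ∈ WW w) :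
    ∃ v ∈ UU s w, HasSum (fun n : ℕ => EE s n * f n) v := by
  unfold WW at hf
  induction hf using Submodule.span_induction with
  | mem F h =>
    obtain ⟨a, b, ε, h1, rfl⟩ := h
    rcases Nat.eq_zero_or_pos b with rfl | hb
    · refine ⟨0, Submodule.zero_mem _, hs_eq hasSum_zero (fun n => ?_) rfl⟩
      beta_reduce
      rw [EE_zero_idx]
      split_ifs with h
      · rw [h, EE_at_zero (by omega)]; simp
      · simp
    · obtain ⟨c, hc⟩ := hasSum_sg_zr ε (r := b + s) (by omega)
      refine ⟨_, Submodule.smul_mem _ c (Submodule.subset_span ⟨a, b, h1, rfl⟩), ?_⟩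
      refine hs_eq (hc.mul_left (π ^ (2 * a))) (fun n => ?_) ?_
      · rw [← EE_mul hb (by omega)]; ring
      · rw [Rat.smul_def]; ring
  | zero => exact ⟨0, Submodule.zero_mem _, by simp⟩
  | add F G _ _ h1 h2 =>
    obtain ⟨g1, a1, b1⟩ := h1
    obtain ⟨g2, a2, b2⟩ := h2
    exact ⟨g1 + g2, Submodule.add_mem _ a1 a2,
      hs_eq (b1.add b2) (fun x => by simp [mul_add]) rfl⟩
  | smul q F _ h =>
    obtain ⟨g, a, b⟩ := h
    exact ⟨q • g, Submodule.smul_mem _ q a,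
      hs_eq (b.mul_left (q : ℝ)) (fun x => by simp [Rat.smul_def]; ring)
        (by simp [Rat.smul_def])⟩

noncomputable def ff (s q p : ℕ) (z : ℕ × ℤ × ℤ) : ℝ :=
  EE s (z.1 + 1) * (wt (z.2.1 - z.2.2 - (z.1 + 1)) *
    (EE q (z.2.1 - z.2.2) * (EE p z.2.1 * EE p (z.1 + 1 - z.2.1)) *
        (EE p z.2.2 * EE p (z.1 + 1 - z.2.2))))

lemma abs_wt (x : ℤ) : |wt x| ≤ 1 := by unfold wt; split_ifs <;> simp

lemma summable_ff {s q p : ℕ} (hs : 2 ≤ s) (hp : 2 ≤ p) : Summable (ff s q p) := by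
  have h2 := summable_EE_two
  have h1 := summable_EE_nat (r := 2) le_rfl
  have h := h1.mul_of_nonneg (h2.mul_of_nonneg h2 EE_two_nonneg EE_two_nonneg)
    (fun x => EE_two_nonneg _) (fun x => mul_nonneg (EE_two_nonneg _) (EE_two_nonneg _))
  refine Summable.of_norm_bounded h (fun z => ?_)
  rw [Real.norm_eq_abs, ff]
  simp only [abs_mul]
  refine mul_le_mul (abs_EE_le_two hs _) ?_ (by positivity) (EE_two_nonneg _)
  have e1 := abs_wt (z.2.1 - z.2.2 - (z.1 + 1))
  have e2 := abs_EE_le_one q (z.2.1 - z.2.2)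
  have e3 := abs_EE_le_one p (z.1 + 1 - z.2.1)
  have e4 := abs_EE_le_one p (z.1 + 1 - z.2.2)
  have e5 := abs_EE_le_two hp z.2.1
  have e6 := abs_EE_le_two hp z.2.2
  have n1 := EE_two_nonneg z.2.1
  have n2 := EE_two_nonneg z.2.2
  calc _ ≤ 1 * (1 * (EE 2 z.2.1 * 1) * (EE 2 z.2.2 * 1)) := by gcongr
    _ = _ := by ring

lemma tsum_ff_mem {s q p : ℕ} (hs : 2 ≤ s) (hq : 2 ≤ q) (hqe : Even q) (hp : 2 ≤ p) :
    ∑' z, ff s q p z ∈ UU s (q + (p + p) + (p + p)) := by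
  obtain ⟨g, hg, hb⟩ := inner_sum_ff hq hqe (show 1 ≤ p by omega)
  obtain ⟨v, hv, hsum⟩ := outer_sum hs hg
  have h := (summable_ff (q := q) hs hp).hasSum
  have h2 := h.prod_fiberwise (g := fun n : ℕ => EE s ((n : ℤ) + 1) * g ((n : ℤ) + 1)) (fun n =>
    hs_eq ((hb ((n : ℤ) + 1) (by omega)).mul_left (EE s ((n : ℤ) + 1))) (fun x => rfl) rfl)
  have h3 := (hasSum_nat_add_iff (f := fun n : ℕ => EE s n * g n) 1).1 (by
    simpa using! h2)
  have h4 := h3.unique hsum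
  simp [EE_at_zero (show 1 ≤ s by omega)] at h4
  rw [h4]; exact hv

abbrev N3 := ℕ × ℕ × ℕ

def phA (t : N3) : ℕ × ℤ × ℤ := (t.2.2, (t.1 + 1) + (t.2.1 + 1) + (t.2.2 + 1), (t.2.1 + 1) + (t.2.2 + 1))
def phB (t : N3) : ℕ × ℤ × ℤ := (t.2.1 + t.2.2 + 1, (t.1 + 1) + (t.2.1 + 1) + (t.2.2 + 1), t.2.2 + 1)
def phC (t : N3) : ℕ × ℤ × ℤ := (t.2.1, (t.1 + 1) + (t.2.1 + 1), -(t.2.2 + 1))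
def phD (t : N3) : ℕ × ℤ × ℤ := (t.1 + t.2.1 + t.2.2 + 2, (t.2.1 + 1) + (t.2.2 + 1), t.2.2 + 1)
def phE (t : N3) : ℕ × ℤ × ℤ := (t.1 + t.2.1 + 1, t.2.1 + 1, -(t.2.2 + 1))
def phF (t : N3) : ℕ × ℤ × ℤ := (t.1, -(t.2.1 + 1), -((t.2.1 + 1) + (t.2.2 + 1)))

lemma region (f : ℕ × ℤ × ℤ → ℝ) (hf : Summable f) (φ : N3 → ℕ × ℤ × ℤ)
    (R : ℕ × ℤ × ℤ → Prop) [DecidablePred R] (hi : Function.Injective φ) (h1 : ∀ t, R (φ t))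
    (h2 : ∀ z, R z → ∃ t, φ t = z) :
    HasSum (fun z => if R z then f z else 0) (∑' t, f (φ t)) := by
  rw [← Function.Injective.hasSum_iff hi]
  · refine hs_eq (hf.comp_injective hi).hasSum (fun t => ?_) rfl
    simp [h1]
  · intro z hz
    rw [if_neg]
    intro h; exact hz (h2 z h)

lemma injA : Function.Injective phA := by
  rintro ⟨a, b, c⟩ ⟨a', b', c'⟩ h; simp [phA] at h ⊢; omega
lemma injB : Function.Injective phB := by
  rintro ⟨a, b, c⟩ ⟨a', b', c'⟩ h; simp [phB] at h ⊢; omega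
lemma injC : Function.Injective phC := by
  rintro ⟨a, b, c⟩ ⟨a', b', c'⟩ h; simp [phC] at h ⊢; omega
lemma injD : Function.Injective phD := by
  rintro ⟨a, b, c⟩ ⟨a', b', c'⟩ h; simp [phD] at h ⊢; omega
lemma injE : Function.Injective phE := by
  rintro ⟨a, b, c⟩ ⟨a', b', c'⟩ h; simp [phE] at h ⊢; omega
lemma injF : Function.Injective phF := by
  rintro ⟨a, b, c⟩ ⟨a', b', c'⟩ h; simp [phF] at h ⊢; omega

lemma chambers (f : ℕ × ℤ × ℤ → ℝ) (hf : Summable f) (hsw : ∀ d x y, f (d, y, x) = f (d, x, y))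
    (h0 : ∀ d y, f (d, 0, y) = 0) (hd : ∀ (d : ℕ) y, f (d, (d : ℤ) + 1, y) = 0)
    (hxx : ∀ d x, f (d, x, x) = 0) :
    ∑' z, f z = 2 * ∑' t, (f (phA t) + f (phB t) + f (phC t) + f (phD t) + f (phE t) + f (phF t)) := by
  have hA := region f hf phA (fun z => z.2.1 > z.2.2 ∧ z.2.2 > z.1 + 1) injA
    (by rintro ⟨a, b, c⟩; simp [phA] <;> omega)
    (by rintro ⟨d, x, y⟩ h; simp at h
        exact ⟨((x - y - 1).toNat, (y - d - 2).toNat, d), by simp [phA]; omega⟩)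
  have hB := region f hf phB (fun z => z.2.1 > z.1 + 1 ∧ (z.1 + 1 : ℤ) > z.2.2 ∧ z.2.2 > 0) injB
    (by rintro ⟨a, b, c⟩; simp [phB]; omega)
    (by rintro ⟨d, x, y⟩ h; simp at h
        exact ⟨((x - d - 2).toNat, (d - y).toNat, (y - 1).toNat), by simp [phB]; omega⟩)
  have hC := region f hf phC (fun z => z.2.1 > z.1 + 1 ∧ 0 > z.2.2) injC
    (by rintro ⟨a, b, c⟩; simp [phC]; omega)
    (by rintro ⟨d, x, y⟩ h; simp at h
        exact ⟨((x - d - 2).toNat, d, (- y - 1).toNat), by simp [phC]; omega⟩)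
  have hD := region f hf phD (fun z => (z.1 + 1 : ℤ) > z.2.1 ∧ z.2.1 > z.2.2 ∧ z.2.2 > 0) injD
    (by rintro ⟨a, b, c⟩; simp [phD]; omega)
    (by rintro ⟨d, x, y⟩ h; simp at h
        exact ⟨((d - x).toNat, (x - y - 1).toNat, (y - 1).toNat), by simp [phD]; omega⟩)
  have hE := region f hf phE (fun z => (z.1 + 1 : ℤ) > z.2.1 ∧ z.2.1 > 0 ∧ 0 > z.2.2) injE
    (by rintro ⟨a, b, c⟩; simp [phE]; omega)
    (by rintro ⟨d, x, y⟩ h; simp at h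
        exact ⟨((d - x).toNat, (x - 1).toNat, (- y - 1).toNat), by simp [phE]; omega⟩)
  have hF := region f hf phF (fun z => 0 > z.2.1 ∧ z.2.1 > z.2.2) injF
    (by rintro ⟨a, b, c⟩; simp [phF]; omega)
    (by rintro ⟨d, x, y⟩ h; simp at h
        exact ⟨(d, (-x - 1).toNat, (x - y - 1).toNat), by simp [phF]; omega⟩)
  have hG := ((((hA.add hB).add hC).add hD).add hE).add hF
  have hG2 : HasSum (fun z : ℕ × ℤ × ℤ => if z.2.1 > z.2.2 then f z else 0) _ := hs_eq hG (fun z => by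
    obtain ⟨d, x, y⟩ := z
    simp only
    by_cases c1 : x = 0
    · subst c1; simp [h0]
    by_cases c2 : x = d + 1
    · subst c2; simp [hd]
    by_cases c3 : y = 0
    · subst c3; rw [← hsw]; simp [h0]
    by_cases c4 : y = d + 1
    · subst c4; rw [← hsw]; simp [hd]
    split_ifs <;> first | omega | simp) rfl
  have hG3 := (Equiv.hasSum_iff (Equiv.prodCongr (Equiv.refl ℕ) (Equiv.prodComm ℤ ℤ))).2 hG2
  have hT := hs_eq (g := f) (hG2.add hG3) (fun z => by
    obtain ⟨d, x, y⟩ := z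
    simp only [Function.comp, Equiv.prodCongr_apply, Prod.map, Equiv.refl_apply,
      Equiv.prodComm_apply, Prod.swap, hsw d x y]
    rcases lt_trichotomy x y with h | h | h
    · simp [h, h.le]
    · subst h; simp [hxx]
    · simp [h, h.le]) rfl
  rw [hT.tsum_eq]
  have sA := hf.comp_injective injA
  have sB := hf.comp_injective injB
  have sC := hf.comp_injective injC
  have sD := hf.comp_injective injD
  have sE := hf.comp_injective injE
  have sF := hf.comp_injective injF
  have hs := ((((sA.hasSum.add sB.hasSum).add sC.hasSum).add sD.hasSum).add sE.hasSum).add sF.hasSum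
  have := hs.tsum_eq
  simp only [Function.comp] at this
  rw [this]; ring

/-- parity weight on a triple -/
noncomputable def w3 (t : N3) : ℝ := if (t.1 + 1) % 2 = (t.2.2 + 1) % 2 then 1 else 0

lemma wt_w3 (t : N3) (x : ℤ) (h : (x - (t.1 + t.2.2)) % 2 = 0) : wt x = w3 t := by
  unfold wt w3
  have : x % 2 = 0 ↔ (t.1 + 1) % 2 = (t.2.2 + 1) % 2 := by omega
  simp only [this]

lemma m1sq (p : ℕ) : ((-1 : ℝ) ^ p) * (-1) ^ p = 1 := by rw [← mul_pow]; simp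

lemma ffA (s q p : ℕ) (t : N3) : ff s q p (phA t) = w3 t * (EE s ((t.2.2 : ℤ) + 1) * EE q ((t.1 : ℤ) + 1) * EE p ((t.2.1 : ℤ) + 1) * EE p (((t.1 : ℤ) + 1) + ((t.2.1 : ℤ) + 1)) *
    EE p (((t.2.1 : ℤ) + 1) + ((t.2.2 : ℤ) + 1)) * EE p (((t.1 : ℤ) + 1) + ((t.2.1 : ℤ) + 1) + ((t.2.2 : ℤ) + 1))) := by
  simp only [ff, phA]
  rw [wt_w3 t _ (by push_cast; omega)]
  rw [show ((t.1 : ℤ) + 1) + ((t.2.1 : ℤ) + 1) + ((t.2.2 : ℤ) + 1) - (((t.2.1 : ℤ) + 1) + ((t.2.2 : ℤ) + 1)) = ((t.1 : ℤ) + 1) by ring, show ((t.2.2 : ℤ) + 1) - (((t.1 : ℤ) + 1) + ((t.2.1 : ℤ) + 1) + ((t.2.2 : ℤ) + 1)) = -(((t.1 : ℤ) + 1) + ((t.2.1 : ℤ) + 1)) by ring,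
    show ((t.2.2 : ℤ) + 1) - (((t.2.1 : ℤ) + 1) + ((t.2.2 : ℤ) + 1)) = -((t.2.1 : ℤ) + 1) by ring, EE_neg p, EE_neg p]
  linear_combination (w3 t * (EE s ((t.2.2 : ℤ) + 1) * EE q ((t.1 : ℤ) + 1) * EE p ((t.2.1 : ℤ) + 1) * EE p (((t.1 : ℤ) + 1) + ((t.2.1 : ℤ) + 1)) *
    EE p (((t.2.1 : ℤ) + 1) + ((t.2.2 : ℤ) + 1)) * EE p (((t.1 : ℤ) + 1) + ((t.2.1 : ℤ) + 1) + ((t.2.2 : ℤ) + 1)))) * m1sq p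

lemma ffB (s q p : ℕ) (t : N3) : ff s q p (phB t) = (-1) ^ p * w3 t * (EE s (((t.2.1 : ℤ) + 1) + ((t.2.2 : ℤ) + 1)) * EE q (((t.1 : ℤ) + 1) + ((t.2.1 : ℤ) + 1)) * EE p ((t.2.1 : ℤ) + 1) *
    EE p ((t.1 : ℤ) + 1) * EE p ((t.2.2 : ℤ) + 1) * EE p (((t.1 : ℤ) + 1) + ((t.2.1 : ℤ) + 1) + ((t.2.2 : ℤ) + 1))) := by
  simp only [ff, phB]
  rw [wt_w3 t _ (by push_cast; omega)]
  push_cast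
  rw [show ((t.2.1 : ℤ) + t.2.2 + 1 + 1) = ((t.2.1 : ℤ) + 1) + ((t.2.2 : ℤ) + 1) by ring,
    show ((t.1 : ℤ) + 1) + ((t.2.1 : ℤ) + 1) + ((t.2.2 : ℤ) + 1) - ((t.2.2 : ℤ) + 1) = ((t.1 : ℤ) + 1) + ((t.2.1 : ℤ) + 1) by ring, show ((t.2.1 : ℤ) + 1) + ((t.2.2 : ℤ) + 1) - (((t.1 : ℤ) + 1) + ((t.2.1 : ℤ) + 1) + ((t.2.2 : ℤ) + 1)) = -((t.1 : ℤ) + 1) by ring,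
    show ((t.2.1 : ℤ) + 1) + ((t.2.2 : ℤ) + 1) - ((t.2.2 : ℤ) + 1) = ((t.2.1 : ℤ) + 1) by ring, EE_neg p]
  ring

lemma ffC (s q p : ℕ) (t : N3) : ff s q p (phC t) = w3 t * (EE s ((t.2.1 : ℤ) + 1) * EE q (((t.1 : ℤ) + 1) + ((t.2.1 : ℤ) + 1) + ((t.2.2 : ℤ) + 1)) * EE p (((t.1 : ℤ) + 1) + ((t.2.1 : ℤ) + 1)) *
    EE p ((t.1 : ℤ) + 1) * EE p ((t.2.2 : ℤ) + 1) * EE p (((t.2.1 : ℤ) + 1) + ((t.2.2 : ℤ) + 1))) := by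
  simp only [ff, phC]
  rw [wt_w3 t _ (by push_cast; omega)]
  rw [show ((t.1 : ℤ) + 1) + ((t.2.1 : ℤ) + 1) - -((t.2.2 : ℤ) + 1) = ((t.1 : ℤ) + 1) + ((t.2.1 : ℤ) + 1) + ((t.2.2 : ℤ) + 1) by ring, show ((t.2.1 : ℤ) + 1) - (((t.1 : ℤ) + 1) + ((t.2.1 : ℤ) + 1)) = -((t.1 : ℤ) + 1) by ring,
    show ((t.2.1 : ℤ) + 1) - -((t.2.2 : ℤ) + 1) = ((t.2.1 : ℤ) + 1) + ((t.2.2 : ℤ) + 1) by ring, EE_neg p, EE_neg p]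
  linear_combination (w3 t * (EE s ((t.2.1 : ℤ) + 1) * EE q (((t.1 : ℤ) + 1) + ((t.2.1 : ℤ) + 1) + ((t.2.2 : ℤ) + 1)) * EE p (((t.1 : ℤ) + 1) + ((t.2.1 : ℤ) + 1)) *
    EE p ((t.1 : ℤ) + 1) * EE p ((t.2.2 : ℤ) + 1) * EE p (((t.2.1 : ℤ) + 1) + ((t.2.2 : ℤ) + 1)))) * m1sq p

lemma ffD (s q p : ℕ) (t : N3) : ff s q p (phD t) = w3 t * (EE s (((t.1 : ℤ) + 1) + ((t.2.1 : ℤ) + 1) + ((t.2.2 : ℤ) + 1)) * EE q ((t.2.1 : ℤ) + 1) * EE p (((t.2.1 : ℤ) + 1) + ((t.2.2 : ℤ) + 1)) *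
    EE p ((t.1 : ℤ) + 1) * EE p ((t.2.2 : ℤ) + 1) * EE p (((t.1 : ℤ) + 1) + ((t.2.1 : ℤ) + 1))) := by
  simp only [ff, phD]
  rw [wt_w3 t _ (by push_cast; omega)]
  push_cast
  rw [show ((t.1 : ℤ) + t.2.1 + t.2.2 + 2 + 1) = ((t.1 : ℤ) + 1) + ((t.2.1 : ℤ) + 1) + ((t.2.2 : ℤ) + 1) by ring,
    show ((t.2.1 : ℤ) + 1) + ((t.2.2 : ℤ) + 1) - ((t.2.2 : ℤ) + 1) = ((t.2.1 : ℤ) + 1) by ring, show ((t.1 : ℤ) + 1) + ((t.2.1 : ℤ) + 1) + ((t.2.2 : ℤ) + 1) - (((t.2.1 : ℤ) + 1) + ((t.2.2 : ℤ) + 1)) = ((t.1 : ℤ) + 1) by ring,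
    show ((t.1 : ℤ) + 1) + ((t.2.1 : ℤ) + 1) + ((t.2.2 : ℤ) + 1) - ((t.2.2 : ℤ) + 1) = ((t.1 : ℤ) + 1) + ((t.2.1 : ℤ) + 1) by ring]
  ring

lemma ffE (s q p : ℕ) (t : N3) : ff s q p (phE t) = (-1) ^ p * w3 t * (EE s (((t.1 : ℤ) + 1) + ((t.2.1 : ℤ) + 1)) * EE q (((t.2.1 : ℤ) + 1) + ((t.2.2 : ℤ) + 1)) * EE p ((t.2.1 : ℤ) + 1) *
    EE p ((t.1 : ℤ) + 1) * EE p ((t.2.2 : ℤ) + 1) * EE p (((t.1 : ℤ) + 1) + ((t.2.1 : ℤ) + 1) + ((t.2.2 : ℤ) + 1))) := by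
  simp only [ff, phE]
  rw [wt_w3 t _ (by push_cast; omega)]
  push_cast
  rw [show ((t.1 : ℤ) + t.2.1 + 1 + 1) = ((t.1 : ℤ) + 1) + ((t.2.1 : ℤ) + 1) by ring,
    show ((t.2.1 : ℤ) + 1) - -((t.2.2 : ℤ) + 1) = ((t.2.1 : ℤ) + 1) + ((t.2.2 : ℤ) + 1) by ring, show ((t.1 : ℤ) + 1) + ((t.2.1 : ℤ) + 1) - ((t.2.1 : ℤ) + 1) = ((t.1 : ℤ) + 1) by ring,
    show ((t.1 : ℤ) + 1) + ((t.2.1 : ℤ) + 1) - -((t.2.2 : ℤ) + 1) = ((t.1 : ℤ) + 1) + ((t.2.1 : ℤ) + 1) + ((t.2.2 : ℤ) + 1) by ring, EE_neg p]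
  ring

lemma ffF (s q p : ℕ) (t : N3) : ff s q p (phF t) = w3 t * (EE s ((t.1 : ℤ) + 1) * EE q ((t.2.2 : ℤ) + 1) * EE p ((t.2.1 : ℤ) + 1) *
    EE p (((t.1 : ℤ) + 1) + ((t.2.1 : ℤ) + 1)) * EE p (((t.2.1 : ℤ) + 1) + ((t.2.2 : ℤ) + 1)) * EE p (((t.1 : ℤ) + 1) + ((t.2.1 : ℤ) + 1) + ((t.2.2 : ℤ) + 1))) := by
  simp only [ff, phF]
  rw [wt_w3 t _ (by push_cast; omega)]
  rw [show -((t.2.1 : ℤ) + 1) - -(((t.2.1 : ℤ) + 1) + ((t.2.2 : ℤ) + 1)) = ((t.2.2 : ℤ) + 1) by ring, show ((t.1 : ℤ) + 1) - -((t.2.1 : ℤ) + 1) = ((t.1 : ℤ) + 1) + ((t.2.1 : ℤ) + 1) by ring,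
    show ((t.1 : ℤ) + 1) - -(((t.2.1 : ℤ) + 1) + ((t.2.2 : ℤ) + 1)) = ((t.1 : ℤ) + 1) + ((t.2.1 : ℤ) + 1) + ((t.2.2 : ℤ) + 1) by ring, EE_neg p, EE_neg p]
  linear_combination (w3 t * (EE s ((t.1 : ℤ) + 1) * EE q ((t.2.2 : ℤ) + 1) * EE p ((t.2.1 : ℤ) + 1) *
    EE p (((t.1 : ℤ) + 1) + ((t.2.1 : ℤ) + 1)) * EE p (((t.2.1 : ℤ) + 1) + ((t.2.2 : ℤ) + 1)) * EE p (((t.1 : ℤ) + 1) + ((t.2.1 : ℤ) + 1) + ((t.2.2 : ℤ) + 1)))) * m1sq p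

lemma ZSO6_eq {s q p : ℕ} (hs : 1 ≤ s) (hq : 1 ≤ q) (hp : 1 ≤ p) :
    ZSO6r q p s p p p = ∑' t, ff s q p (phA t) := by
  unfold ZSO6r Z3r
  congr 1; ext t
  rw [ffA, w3, EE_pos hs, EE_pos hq, EE_pos hp, EE_pos hp, EE_pos hp, EE_pos hp]
  push_cast
  simp only [inv_pow, div_eq_mul_inv, mul_inv]
  ring

lemma ff_chambers {s q p : ℕ} (hs : 2 ≤ s) (hq : 2 ≤ q) (hqe : Even q) (hp : 2 ≤ p) :
    ∑' z, ff s q p z = 2 * ∑' t, (ff s q p (phA t) + ff s q p (phB t) + ff s q p (phC t) +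
      ff s q p (phD t) + ff s q p (phE t) + ff s q p (phF t)) := by
  refine chambers _ (summable_ff hs hp) ?_ ?_ ?_ ?_
  · intro d x y
    simp only [ff]
    rw [← neg_sub x y, EE_neg q, hqe.neg_one_pow]
    have : wt (-(x - y) - (d + 1)) = wt (x - y - (d + 1)) := by
      unfold wt
      have : (-(x - y) - ((d : ℤ) + 1)) % 2 = 0 ↔ (x - y - ((d : ℤ) + 1)) % 2 = 0 := by omega
      simp only [this]
    rw [this]; ring
  · intro d y; simp [ff, EE_at_zero (show 1 ≤ p by omega)]
  · intro d y; simp [ff, EE_at_zero (show 1 ≤ p by omega)]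
  · intro d y; simp [ff, EE_at_zero (show 1 ≤ q by omega)]

lemma EE_succ {q : ℕ} (hq : 1 ≤ q) (x : ℤ) : EE q x = x * EE (q + 1) x := by
  rw [EE_pos hq, EE_pos (by omega)]
  rcases eq_or_ne x 0 with rfl | hx
  · simp [show q ≠ 0 by omega]
  · have e2 : (x : ℝ) ≠ 0 := by exact_mod_cast hx
    rw [pow_succ]; field_simp

lemma part1_eq {q : ℕ} (hq : 2 ≤ q) (hqe : Even q) :
    ZSO6r q q q q q q = (1 / 12 : ℚ) • ∑' z, ff q q q z := by
  rw [ZSO6_eq (by omega) (by omega) (by omega), ff_chambers hq hq hqe hq]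
  have : ∀ t, (ff q q q (phA t) + ff q q q (phB t) + ff q q q (phC t) +
      ff q q q (phD t) + ff q q q (phE t) + ff q q q (phF t)) = 6 * ff q q q (phA t) := by
    intro t
    rw [ffA, ffB, ffC, ffD, ffE, ffF, hqe.neg_one_pow]; ring
  simp_rw [this, tsum_mul_left, Rat.smul_def]
  push_cast; ring

lemma part2_eq {q : ℕ} (hq : 2 ≤ q) (hqe : Even q) :
    ZSO6r q (q + 1) (q + 1) (q + 1) (q + 1) (q + 1) =
      (1 / 4 : ℚ) • ∑' z, ff (q + 1) q (q + 1) z := by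
  rw [ZSO6_eq (by omega) (by omega) (by omega), ff_chambers (by omega) hq hqe (by omega)]
  have : ∀ t, (ff (q + 1) q (q + 1) (phA t) + ff (q + 1) q (q + 1) (phB t) +
      ff (q + 1) q (q + 1) (phC t) + ff (q + 1) q (q + 1) (phD t) + ff (q + 1) q (q + 1) (phE t) +
      ff (q + 1) q (q + 1) (phF t)) = ff (q + 1) q (q + 1) (phA t) + ff (q + 1) q (q + 1) (phF t) := by
    intro t
    rw [ffA, ffB, ffC, ffD, ffE, ffF, (Even.add_one hqe).neg_one_pow]
    simp only [EE_succ (show 1 ≤ q by omega)]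
    push_cast; ring
  simp_rw [this]
  have sf := summable_ff (s := q + 1) (q := q) (p := q + 1) (by omega) (by omega)
  have sA := sf.comp_injective injA
  have sF := sf.comp_injective injF
  have h1 : ∑' t, ff (q + 1) q (q + 1) (phF t) = ∑' t, ff (q + 1) q (q + 1) (phA t) := by
    let e : N3 ≃ N3 := ⟨fun t => (t.2.2, t.2.1, t.1), fun t => (t.2.2, t.2.1, t.1),
      fun _ => rfl, fun _ => rfl⟩
    rw [← e.tsum_eq]
    congr 1; ext t
    rw [ffA, ffF]
    have : w3 (e t) = w3 t := by simp only [w3, e, Equiv.coe_fn_mk, eq_comm]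
    rw [this]
    simp only [e, Equiv.coe_fn_mk]
    rw [show (t.2.2 + 1 + (t.2.1 + 1) : ℤ) = t.2.1 + 1 + (t.2.2 + 1) by ring,
      show (t.2.1 + 1 + (t.1 + 1) : ℤ) = t.1 + 1 + (t.2.1 + 1) by ring,
      show (t.2.1 + 1 + (t.2.2 + 1) + (t.1 + 1) : ℤ) = t.1 + 1 + (t.2.1 + 1) + (t.2.2 + 1) by ring]
    ring
  have h2 := (sA.hasSum.add sF.hasSum).tsum_eq
  simp only [Function.comp] at h2
  rw [h2, h1, Rat.smul_def]; push_cast; ring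

lemma pi_even_mem (a : ℕ) : π ^ (2 * a) ∈ Algebra.adjoin ℚ zetaValues := by
  have h6 : π ^ 2 = (6 : ℚ) • zr 2 := by
    have := (hasSum_zr (r := 2) le_rfl).unique
      (hs_eq hasSum_zeta_two (fun n => by rw [EE_pos (by norm_num)]; simp) rfl)
    rw [this, Rat.smul_def]; push_cast; ring
  rw [pow_mul]
  apply Subalgebra.pow_mem
  rw [h6]
  exact Subalgebra.smul_mem _ (Algebra.subset_adjoin (show zr 2 ∈ zetaValues from ⟨2, le_rfl, zr_zeta le_rfl⟩)) _

lemma UU_adjoin {s w : ℕ} (hs : 2 ≤ s) {x : ℝ} (hx : x ∈ UU s w) :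
    x ∈ Algebra.adjoin ℚ zetaValues := by
  have : UU s w ≤ Subalgebra.toSubmodule (Algebra.adjoin ℚ zetaValues) := by
    refine Submodule.span_le.2 ?_
    rintro x ⟨a, b, h, rfl⟩
    exact Subalgebra.mul_mem _ (pi_even_mem a)
      (Algebra.subset_adjoin (show zr (b + s) ∈ zetaValues from ⟨b + s, by omega, zr_zeta (by omega)⟩))
  exact this hx

lemma UU_pi {s w : ℕ} (hs : 2 ≤ s) (hse : Even s) (hw : Even w) {x : ℝ} (hx : x ∈ UU s w) :
    ∃ r : ℚ, x = r * π ^ (s + w) := by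
  unfold UU at hx
  induction hx using Submodule.span_induction with
  | mem x h =>
    obtain ⟨a, b, h, rfl⟩ := h
    obtain ⟨k, hk⟩ : ∃ k, b + s = 2 * k := by
      obtain ⟨c, rfl⟩ := hse
      obtain ⟨d, rfl⟩ := hw
      exact ⟨(b + (c + c)) / 2, by omega⟩
    obtain ⟨r, hr⟩ := zr_even (k := k) (by omega)
    refine ⟨r, ?_⟩
    rw [hk, hr, show s + w = 2 * a + 2 * k by omega, pow_add]; ring
  | zero => exact ⟨0, by simp⟩
  | add x y _ _ h1 h2 =>
    obtain ⟨r1, h1⟩ := h1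
    obtain ⟨r2, h2⟩ := h2
    exact ⟨r1 + r2, by rw [h1, h2]; push_cast; ring⟩
  | smul q x _ h =>
    obtain ⟨r, h⟩ := h
    exact ⟨q * r, by rw [h, Rat.smul_def]; push_cast; ring⟩

/-- Proposition 6.2 of Komori–Matsumoto–Tsumura:
`ζ₃((2k,…,2k);SO(6)) ∈ ℚ·π^{12k}` and
`ζ₃((2k,2k+1,…,2k+1);SO(6))` lies in the `ℚ`-algebra generated by Riemann
zeta values. -/
theorem SO6_values (k : ℕ) (hk : 0 < k) :
    (∃ r : ℚ, ZSO6r (2 * k) (2 * k) (2 * k) (2 * k) (2 * k) (2 * k) =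
        (r : ℝ) * π ^ (12 * k)) ∧
      ZSO6r (2 * k) (2 * k + 1) (2 * k + 1) (2 * k + 1) (2 * k + 1) (2 * k + 1) ∈
        Algebra.adjoin ℚ zetaValues := by
  have hq : 2 ≤ 2 * k := by omega
  have hqe : Even (2 * k) := even_two_mul k
  constructor
  · rw [part1_eq hq hqe]
    obtain ⟨r, hr⟩ := UU_pi hq hqe ⟨5 * k, by ring⟩ (Submodule.smul_mem _ (1 / 12 : ℚ)
      (tsum_ff_mem hq hq hqe hq))
    refine ⟨r, ?_⟩
    rw [hr]; congr 2; ring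
  · rw [part2_eq hq hqe]
    exact UU_adjoin (by omega) (Submodule.smul_mem _ (1 / 4 : ℚ)
      (tsum_ff_mem (by omega) hq hqe (by omega)))
end
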